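/- arXiv:2007.15682 — 2 statements merged into one kernel-verified Lean document; each statement's English description precedes it below -/
import Mathlib

section
/- Let q be a prime power, n > 1 not a prime power, and d_1 < ⋯ < d_k < n divisors of n with d_i ∤ d_j for i ≠ j, such that lcm(d_1, …, d_k) < n. Then for every d-admissible tuple (a_1, …, a_k) with a_i ∈ F_{q^{d_i}}, there exists a primitive element α ∈ F_{q^n} with Tr_{n/d_i}(α) = a_i for all i, except in the genuine exceptional cases inherited from Cohen's theorem (n/lcm = 2 with the required intermediate trace forced to 0, etc. — in fact no exceptions arise since a nonzero intermediate element can always be chosen). -/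
/-!
Let `L = lcm (d_1, …, d_k)`. It suffices to find a nonzero `b ∈ F_{q^L}` whose trace to each
`F_{q^{d_i}}` is `a_i`, and then a primitive `α ∈ F_{q^n}` whose trace to `F_{q^L}` is `b`: by
transitivity of the trace, `α` has the prescribed traces.

The element `b` (`exists_ne_zero_forall_Tr_eq`). Let the variable `X` of `F_q[X]` act on `F_{q^n}` as
the Frobenius. By the normal basis theorem (`exists_frobAct_generator`), `F_{q^n}` is then isomorphic
to `F_q[X] / (X^n - 1)`, and the trace from level `m` to level `d` is multiplication by
`(X^m - 1) / (X^d - 1)`. The conditions on `b` become congruences modulo the polynomials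
`X^{d_i} - 1`, and admissibility says that these congruences are compatible modulo
`gcd (X^{d_i} - 1, X^{d_j} - 1) = X^{gcd (d_i, d_j)} - 1`. Pairwise compatible congruences over a
principal ideal domain have a common solution (`exists_forall_dvd_sub`). Since every `d_i` is a
proper divisor of `L`, the polynomial `(X^L - 1) / Φ_L` is divisible by all `X^{d_i} - 1` but not by
`X^L - 1`, so adding it to a solution which gives `b = 0` makes `b` nonzero.

The element `α` (`exists_primitive_trace_eq`). This is an instance of Cohen's theorem; here
`L ≥ 6`, because `L` has two divisors neither of which divides the other. Put `F = F_{q^L}`,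
`K = F_{q^n}`. The second moment of the sums of a nontrivial character of `Kˣ` over the fibres of the
trace shows that each such sum, over the fibre of some `b ≠ 0`, has absolute value at most
`√(|K| / |F|)` (`norm_sq_traceSum_le`). A sieve over the characters of prime order
(`exists_forall_ne_one_of_sum_lt`) then produces a primitive element in the fibre as soon as
`4 ^ ω ≤ |K| / |F|`, where `ω` is the number of prime divisors of `|K| - 1`. This inequality follows
from comparing `|K| - 1` with a product of the first primes when `|K|` is large, and from a finite
computation otherwise (`four_pow_card_primeFactors_le`), with the two exceptions
`(|F|, |K|) = (2^6, 2^12)` and `(3^6, 3^12)`. There one uses that for characters trivial on `Fˣ` the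
bound for the sums improves to `√|K| / |F|` (`norm_sq_traceSum_of_trivial`).
-/

open Finset

/-- `Tr q N d α = ∑_{i=0}^{N/d-1} α^{q^{d·i}}`, the trace from `F_{q^N}` to `F_{q^d}`. -/
noncomputable def Tr (q N d : ℕ) {K : Type*} [Field K] (α : K) : K :=
  ∑ i ∈ Finset.range (N / d), α ^ q ^ (d * i)

/-- A primitive element: a generator of the multiplicative group of the finite field. -/
def IsPrimitiveElement {K : Type*} [Field K] (α : K) : Prop :=
  α ≠ 0 ∧ ∀ β : K, β ≠ 0 → ∃ m : ℕ, β = α ^ m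

/-! ### Character sums over the fibres of the trace -/

section CharSums
variable {F K : Type*} [Field F] [Field K] [Algebra F K] [Fintype F] [Fintype K]

lemma card_trace_fiber [DecidableEq F] (b : F) :
    #{x : K | Algebra.trace F K x = b} * Fintype.card F = Fintype.card K := by
  classical
  have hs := Algebra.trace_surjective F K
  have h : ∀ c : F, #{x : K | Algebra.trace F K x = c} = #{x : K | Algebra.trace F K x = b} := by
    intro c
    obtain ⟨t, ht⟩ := hs (b - c)
    refine Finset.card_bij (fun x _ ↦ x + t) ?_ ?_ ?_
    · intro x hx
      simp only [mem_filter, mem_univ, true_and] at hx ⊢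
      rw [map_add, hx, ht]; ring
    · intro x _ y _ h; simpa using h
    · intro y hy
      simp only [mem_filter, mem_univ, true_and] at hy
      refine ⟨y - t, ?_, by ring⟩
      simp only [mem_filter, mem_univ, true_and, map_sub, hy, ht]; ring
  have := Finset.card_eq_sum_card_fiberwise (f := Algebra.trace F K) (s := (univ : Finset K))
    (t := (univ : Finset F)) (by simp [Set.MapsTo])
  rw [Finset.sum_congr rfl (fun c _ ↦ h c)] at this
  simp only [Finset.sum_const, Finset.card_univ, smul_eq_mul] at this
  rw [this, mul_comm]

open Classical in
/-- The sum of `χ` over the elements of `K` whose trace to `F` is `b`. -/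
noncomputable def traceSum (F : Type*) {K : Type*} [Field F] [Field K] [Algebra F K] [Fintype K]
    (χ : MulChar K ℂ) (b : F) : ℂ :=
  ∑ x : K with Algebra.trace F K x = b, χ x

omit [Fintype F] in
lemma traceSum_eq_mul (χ : MulChar K ℂ) {b : F} (hb : b ≠ 0) :
    traceSum F χ b = χ (algebraMap F K b) * traceSum F χ 1 := by
  classical
  have hb' : algebraMap F K b ≠ 0 := by simpa using hb
  have hT : ∀ x, Algebra.trace F K (algebraMap F K b * x) = b * Algebra.trace F K x := by
    intro x; rw [← Algebra.smul_def, map_smul, smul_eq_mul]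
  rw [traceSum, traceSum, Finset.mul_sum]
  symm
  refine Finset.sum_bij (fun x _ ↦ algebraMap F K b * x) ?_ ?_ ?_ ?_
  · intro x hx
    simp only [mem_filter, mem_univ, true_and] at hx ⊢
    rw [hT, hx, mul_one]
  · intro x _ y _ h; exact mul_left_cancel₀ hb' h
  · intro y hy
    simp only [mem_filter, mem_univ, true_and] at hy
    have e : algebraMap F K b * ((algebraMap F K b)⁻¹ * y) = y := mul_inv_cancel_left₀ hb' y
    refine ⟨(algebraMap F K b)⁻¹ * y, ?_, e⟩
    simp only [mem_filter, mem_univ, true_and]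
    apply mul_left_cancel₀ hb
    rw [← hT, e, hy, mul_one]
  · intro x _; rw [map_mul]

lemma norm_mulChar_eq_one (χ : MulChar K ℂ) {x : K} (hx : x ≠ 0) : ‖χ x‖ = 1 := by
  classical
  have h := χ.pow_card_eq_one
  have h2 : (χ x) ^ Fintype.card Kˣ = 1 := by
    rw [← MulChar.pow_apply' _ Fintype.card_ne_zero, h, MulChar.one_apply hx.isUnit]
  exact Complex.norm_eq_one_of_pow_eq_one h2 Fintype.card_ne_zero

/-- The second moment of the sums `traceSum F χ b`, with `N = |K| / |F|` the size of a trace fibre.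
It is `∑ χ (x / y)` over the pairs with `Tr x = Tr y` and `y ≠ 0`; after the substitution `x = y z`
the number of admissible `y` is the same for all `z ≠ 1`, and `∑ z, χ z = 0`. -/
lemma sum_norm_sq_traceSum {χ : MulChar K ℂ} (hχ : χ ≠ 1) {N : ℕ}
    (hN : N * Fintype.card F = Fintype.card K) :
    ∑ b : F, ‖traceSum F χ b‖ ^ 2 = N * ((Fintype.card F : ℝ) - 1) := by
  classical
  have hker : #{x : K | Algebra.trace F K x = 0} = N :=
    Nat.eq_of_mul_eq_mul_right Fintype.card_pos ((card_trace_fiber (K := K) (0 : F)).trans hN.symm)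
  have h0 : ∑ z : K, χ z = 0 := MulChar.sum_eq_zero_of_ne_one hχ
  have key : ∑ b : F, traceSum F χ b * (starRingEnd ℂ) (traceSum F χ b)
      = N * ((Fintype.card F : ℂ) - 1) := by
    calc ∑ b : F, traceSum F χ b * (starRingEnd ℂ) (traceSum F χ b)
        = ∑ b : F, ∑ y : K, if Algebra.trace F K y = b then
            ∑ x : K, (if Algebra.trace F K x = b then χ x * χ⁻¹ y else 0) else 0 := by
          refine Finset.sum_congr rfl fun b _ ↦ ?_
          rw [traceSum, map_sum, Finset.sum_mul_sum, Finset.sum_comm, Finset.sum_filter]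
          refine Finset.sum_congr rfl fun y _ ↦ ?_
          split_ifs
          · rw [Finset.sum_filter]
            refine Finset.sum_congr rfl fun x _ ↦ ?_
            rw [← MulChar.star_apply', starRingEnd_apply]
          · rfl
      _ = ∑ y : K, ∑ x : K, if Algebra.trace F K x = Algebra.trace F K y
            then χ x * χ⁻¹ y else 0 := by
          rw [Finset.sum_comm]
          refine Finset.sum_congr rfl fun y _ ↦ ?_
          rw [Finset.sum_ite_eq]
          simp
      _ = ∑ y : K, ∑ z : K, if y ≠ 0 ∧ Algebra.trace F K (y * (z - 1)) = 0 then χ z else 0 := by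
          refine Finset.sum_congr rfl fun y _ ↦ ?_
          by_cases hy : y = 0
          · have h00 : (χ⁻¹ : MulChar K ℂ) 0 = 0 := MulChar.map_nonunit _ (by simp)
            simp [hy, h00]
          · rw [← Equiv.sum_comp (Equiv.mulLeft₀ y hy)]
            refine Finset.sum_congr rfl fun z _ ↦ ?_
            have e1 : (Algebra.trace F K (y * z) = Algebra.trace F K y) ↔
              Algebra.trace F K (y * (z - 1)) = 0 := by
              rw [mul_sub, mul_one, map_sub, sub_eq_zero]
            have e2 : χ (y * z) * χ⁻¹ y = χ z := by
              have : χ y * χ⁻¹ y = 1 := by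
                rw [← MulChar.mul_apply, mul_inv_cancel, MulChar.one_apply (Ne.isUnit hy)]
              rw [map_mul, mul_right_comm, this, one_mul]
            simp only [Equiv.mulLeft₀_apply, e1, e2, hy, ne_eq, not_false_eq_true, true_and]
      _ = ∑ z : K, χ z * (#{y : K | y ≠ 0 ∧ Algebra.trace F K (y * (z - 1)) = 0} : ℂ) := by
          rw [Finset.sum_comm]
          refine Finset.sum_congr rfl fun z _ ↦ ?_
          rw [← Finset.sum_filter, Finset.sum_const, nsmul_eq_mul, mul_comm]
      _ = ∑ z : K, (χ z * ((N : ℂ) - 1) +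
            if z = 1 then ((Fintype.card K : ℂ) - N) else 0) := by
          refine Finset.sum_congr rfl fun z _ ↦ ?_
          split_ifs with hz
          · have : ({y : K | y ≠ 0 ∧ Algebra.trace F K (y * (z - 1)) = 0} : Finset K)
              = univ.erase 0 := by
              ext y; simp [hz]
            rw [this, Finset.card_erase_of_mem (mem_univ _), Finset.card_univ,
              Nat.cast_sub Fintype.card_pos, hz, map_one]
            push_cast; ring
          · have hz' : z - 1 ≠ 0 := sub_ne_zero.2 hz
            have : #{y : K | y ≠ 0 ∧ Algebra.trace F K (y * (z - 1)) = 0}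
              = #(({x : K | Algebra.trace F K x = 0} : Finset K).erase 0) := by
              refine Finset.card_bij (fun y _ ↦ y * (z - 1)) ?_ ?_ ?_
              · intro y hy
                simp only [mem_filter, mem_univ, true_and] at hy
                simp [hy, hz']
              · intro x _ y _ h; exact mul_right_cancel₀ hz' h
              · intro y hy
                simp only [mem_erase, mem_filter, mem_univ, true_and] at hy
                refine ⟨y / (z - 1), ?_, div_mul_cancel₀ _ hz'⟩
                simp [div_mul_cancel₀ _ hz', hy.1, hy.2, hz']
            rw [this, Finset.card_erase_of_mem (by simp), hker, Nat.cast_sub]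
            · push_cast; ring
            · rw [← hker]; exact Finset.card_pos.2 ⟨0, by simp⟩
      _ = N * ((Fintype.card F : ℂ) - 1) := by
          rw [Finset.sum_add_distrib, ← Finset.sum_mul, h0, Finset.sum_ite_eq', ← hN]
          simp; ring
  have : ((∑ b : F, ‖traceSum F χ b‖ ^ 2 : ℝ) : ℂ) = ((N * ((Fintype.card F : ℝ) - 1) : ℝ) : ℂ) := by
    push_cast
    rw [← key]
    refine Finset.sum_congr rfl fun b _ ↦ ?_
    rw [Complex.mul_conj']
  exact_mod_cast this

lemma one_lt_card_real : (1 : ℝ) < Fintype.card F := by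
  exact_mod_cast Fintype.one_lt_card

omit [Fintype F] in
lemma norm_traceSum (χ : MulChar K ℂ) {b : F} (hb : b ≠ 0) :
    ‖traceSum F χ b‖ = ‖traceSum F χ 1‖ := by
  rw [traceSum_eq_mul χ hb, norm_mul, norm_mulChar_eq_one χ (by simpa using hb), one_mul]

lemma sum_erase_norm_traceSum [DecidableEq F] (χ : MulChar K ℂ) :
    ∑ b ∈ univ.erase (0 : F), ‖traceSum F χ b‖ ^ 2
      = ((Fintype.card F : ℝ) - 1) * ‖traceSum F χ 1‖ ^ 2 := by
  rw [Finset.sum_congr rfl (fun b hb ↦ by rw [norm_traceSum χ (Finset.ne_of_mem_erase hb)]),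
    Finset.sum_const, Finset.card_erase_of_mem (mem_univ _), Finset.card_univ, nsmul_eq_mul,
    Nat.cast_sub Fintype.card_pos, Nat.cast_one]

/-- For `b ≠ 0` the norms of the `|F| - 1` sums `traceSum F χ b` agree, so the second moment bounds
each of them by the square root of the size of a trace fibre. -/
lemma norm_sq_traceSum_le {χ : MulChar K ℂ} (hχ : χ ≠ 1) {N : ℕ}
    (hN : N * Fintype.card F = Fintype.card K) {b : F} (hb : b ≠ 0) :
    ‖traceSum F χ b‖ ^ 2 ≤ N := by
  classical
  have h1 := sum_norm_sq_traceSum hχ hN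
  rw [← Finset.add_sum_erase _ _ (mem_univ (0 : F)), sum_erase_norm_traceSum] at h1
  have hQ := one_lt_card_real (F := F)
  rw [norm_traceSum χ hb]
  by_contra! h
  nlinarith [sq_nonneg ‖traceSum F χ 0‖]

/-- If `χ` is trivial on `Fˣ`, the sums over all nonzero `b` coincide and cancel against the one
over `b = 0`, which sharpens the bound by a factor `√|F|`. -/
lemma norm_sq_traceSum_of_trivial {χ : MulChar K ℂ} (hχ : χ ≠ 1) {N : ℕ}
    (hN : N * Fintype.card F = Fintype.card K) {b : F} (hb : b ≠ 0)
    (htriv : ∀ c : F, c ≠ 0 → χ (algebraMap F K c) = 1) :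
    Fintype.card F * ‖traceSum F χ b‖ ^ 2 = N := by
  classical
  have h1 := sum_norm_sq_traceSum hχ hN
  rw [← Finset.add_sum_erase _ _ (mem_univ (0 : F)), sum_erase_norm_traceSum] at h1
  have hQ := one_lt_card_real (F := F)
  have h2 : ∑ c : F, traceSum F χ c = 0 := by
    rw [← MulChar.sum_eq_zero_of_ne_one hχ]
    exact Finset.sum_fiberwise _ _ _
  rw [← Finset.add_sum_erase _ _ (mem_univ (0 : F)), Finset.sum_congr rfl (fun c hc ↦ by
    rw [traceSum_eq_mul χ (Finset.ne_of_mem_erase hc), htriv c (Finset.ne_of_mem_erase hc),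
      one_mul]), Finset.sum_const, Finset.card_erase_of_mem (mem_univ _), Finset.card_univ,
    nsmul_eq_mul, Nat.cast_sub Fintype.card_pos, Nat.cast_one] at h2
  have h3 : ‖traceSum F χ 0‖ = ((Fintype.card F : ℝ) - 1) * ‖traceSum F χ 1‖ := by
    rw [eq_neg_of_add_eq_zero_left h2, norm_neg, norm_mul]
    congr 1
    have : ((Fintype.card F : ℂ) - 1) = (((Fintype.card F : ℝ) - 1 : ℝ) : ℂ) := by push_cast; rfl
    rw [this, Complex.norm_real, Real.norm_of_nonneg (by linarith)]
  rw [h3] at h1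
  rw [norm_traceSum χ hb]
  apply mul_left_cancel₀ (sub_ne_zero.2 hQ.ne')
  linarith

end CharSums

/-! ### A sieve for primitive elements -/

section Sieve
variable {K : Type*} [Field K] [Fintype K]

omit [Fintype K] in
lemma mulChar_prod_apply {ι : Type*} (T : Finset ι) (χ : ι → MulChar K ℂ) {x : K} (hx : x ≠ 0) :
    (∏ i ∈ T, χ i) x = ∏ i ∈ T, χ i x := by
  classical
  induction T using Finset.induction_on with
  | empty => simp [MulChar.one_apply hx.isUnit]
  | insert i T hi ih => rw [prod_insert hi, prod_insert hi, MulChar.mul_apply, ih]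

omit [Fintype K] in
/-- A lower-bound sieve over the characters `ψ p` of prime order `p`: the function
`∏ p ∈ P, (p - 1 - ∑ 0 < j < p, ψ p x ^ j)` vanishes as soon as one `ψ p x` equals `1`, and its sum
over `A` has main term `#A * ∏ p ∈ P, (p - 1)`. -/
lemma exists_forall_ne_one_of_sum_lt (P : Finset ℕ) (ψ : ℕ → MulChar K ℂ)
    (hp : ∀ p ∈ P, p.Prime) (A : Finset K) (hA : (0 : K) ∉ A) (E : Finset ℕ → ℝ)
    (hE : ∀ T ⊆ P, T.Nonempty → ∀ j : ℕ → ℕ, (∀ p ∈ T, 0 < j p ∧ j p < p) →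
      ‖∑ x ∈ A, (∏ p ∈ T, ψ p ^ j p) x‖ ≤ E T)
    (h : ∑ T ∈ P.powerset.erase ∅, E T < #A) :
    ∃ x ∈ A, ∀ p ∈ P, ψ p x ≠ 1 := by
  classical
  by_contra! hcon
  let D : Finset ℕ → ℝ := fun T ↦ ∏ p ∈ T, ((p : ℝ) - 1)
  have hDpos : ∀ T ⊆ P, 0 < D T := fun T hT ↦ Finset.prod_pos fun p hpT ↦ by
    have : (1 : ℝ) < p := by exact_mod_cast (hp p (hT hpT)).one_lt
    linarith
  let G : Finset ℕ → ℂ := fun T ↦ ∑ x ∈ A, ∏ p ∈ T, (-∑ j ∈ Ico 1 p, (ψ p x) ^ j)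
  have hG : ∀ T ⊆ P, T.Nonempty → ‖G T‖ ≤ D T * E T := by
    intro T hT hne
    have e1 : ‖G T‖ = ‖∑ g ∈ T.pi (fun p ↦ Ico 1 p), ∑ x ∈ A,
        ∏ p ∈ T.attach, (ψ p x) ^ (g p.1 p.2)‖ := by
      simp only [G, Finset.prod_neg, ← Finset.mul_sum, norm_mul, norm_pow, norm_neg, norm_one,
        one_pow, one_mul]
      rw [Finset.sum_comm]
      congr 1
      refine Finset.sum_congr rfl fun x _ ↦ ?_
      rw [Finset.prod_sum]
    have e2 : D T * E T = ∑ g ∈ T.pi (fun p ↦ Ico 1 p), E T := by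
      rw [Finset.sum_const, Finset.card_pi, nsmul_eq_mul]
      congr 1
      push_cast
      refine Finset.prod_congr rfl fun p hpT ↦ ?_
      rw [Nat.card_Ico, Nat.cast_sub (hp p (hT hpT)).one_lt.le, Nat.cast_one]
    rw [e1, e2]
    refine (norm_sum_le _ _).trans (Finset.sum_le_sum fun g hg ↦ ?_)
    let j : ℕ → ℕ := fun p ↦ if hpT : p ∈ T then g p hpT else 1
    have hj : ∀ p ∈ T, 0 < j p ∧ j p < p := by
      intro p hpT
      have := Finset.mem_pi.1 hg p hpT
      rw [Finset.mem_Ico] at this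
      simp only [j, hpT, dif_pos]; omega
    refine le_of_eq_of_le ?_ (hE T hT hne j hj)
    congr 1
    refine Finset.sum_congr rfl fun x hx ↦ ?_
    have hx0 : x ≠ 0 := fun h0 ↦ hA (h0 ▸ hx)
    rw [mulChar_prod_apply T _ hx0, ← Finset.prod_attach T]
    refine Finset.prod_congr rfl fun p _ ↦ ?_
    have e : j p = g p.1 p.2 := by simp [j]
    rw [← e, MulChar.pow_apply' _ (hj p.1 p.2).1.ne']
  have hzero : ∑ T ∈ P.powerset, G T * ((D (P \ T) : ℝ) : ℂ) = 0 := by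
    calc ∑ T ∈ P.powerset, G T * ((D (P \ T) : ℝ) : ℂ)
        = ∑ x ∈ A, ∏ p ∈ P, (-∑ j ∈ Ico 1 p, (ψ p x) ^ j + ((p : ℂ) - 1)) := by
          simp only [Finset.prod_add, G, D, Finset.sum_mul]
          rw [Finset.sum_comm]
          push_cast
          rfl
      _ = 0 := Finset.sum_eq_zero fun x hx ↦ by
          obtain ⟨p, hpP, hpx⟩ := hcon x hx
          refine Finset.prod_eq_zero hpP ?_
          simp [hpx, Nat.cast_sub (hp p hpP).one_lt.le]
  rw [← Finset.add_sum_erase _ _ (Finset.empty_mem_powerset P)] at hzero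
  have h0 : G ∅ = #A := by simp [G]
  rw [h0, Finset.sdiff_empty] at hzero
  have h1 : (#A : ℝ) * D P ≤ (∑ T ∈ P.powerset.erase ∅, E T) * D P := by
    have : ((#A : ℝ) * D P) = ‖∑ T ∈ P.powerset.erase ∅, G T * ((D (P \ T) : ℝ) : ℂ)‖ := by
      rw [eq_neg_of_add_eq_zero_right hzero, norm_neg, norm_mul, Complex.norm_natCast,
        Complex.norm_real, Real.norm_of_nonneg (hDpos P subset_rfl).le]
    rw [this, Finset.sum_mul]
    refine (norm_sum_le _ _).trans (Finset.sum_le_sum fun T hT ↦ ?_)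
    rw [Finset.mem_erase, Finset.mem_powerset] at hT
    have hD := hDpos (P \ T) Finset.sdiff_subset
    rw [norm_mul, Complex.norm_real, Real.norm_of_nonneg hD.le]
    refine (mul_le_mul_of_nonneg_right (hG T hT.2 (Finset.nonempty_iff_ne_empty.2 hT.1))
      hD.le).trans (le_of_eq ?_)
    rw [← Finset.prod_sdiff hT.2 (f := fun p : ℕ ↦ (p : ℝ) - 1) |>.trans (rfl : D P = D P)]
    ring
  exact absurd (le_of_mul_le_mul_right h1 (hDpos P subset_rfl)) (not_le.2 h)

omit [Fintype K] in
/-- Characters of distinct prime orders are multiplicatively independent. -/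
lemma prod_pow_ne_one {P : Finset ℕ} {ψ : ℕ → MulChar K ℂ} (hp : ∀ p ∈ P, p.Prime)
    (hψ : ∀ p ∈ P, orderOf (ψ p) = p) {T : Finset ℕ} (hT : T ⊆ P) (hne : T.Nonempty) {j : ℕ → ℕ}
    (hj : ∀ p ∈ T, 0 < j p ∧ j p < p) : ∏ p ∈ T, ψ p ^ j p ≠ 1 := by
  classical
  intro h
  obtain ⟨p, hpT⟩ := hne
  have h2 := congrArg (· ^ (∏ l ∈ T.erase p, l)) h
  simp only [one_pow] at h2
  rw [← Finset.mul_prod_erase T (fun p ↦ ψ p ^ j p) hpT, mul_pow, ← Finset.prod_pow (T.erase p),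
    Finset.prod_eq_one (s := T.erase p) (f := fun l ↦ (ψ l ^ j l) ^ ∏ l ∈ T.erase p, l),
    mul_one, ← pow_mul] at h2
  · have h3 := orderOf_dvd_of_pow_eq_one h2
    have hpp := hp p (hT hpT)
    rw [hψ p (hT hpT), hpp.dvd_mul] at h3
    rcases h3 with h3 | h3
    · exact absurd (Nat.le_of_dvd (hj p hpT).1 h3) (not_le.2 (hj p hpT).2)
    · obtain ⟨l, hl, hpl⟩ := (Prime.dvd_finsetProd_iff hpp.prime _).1 h3
      rw [Finset.mem_erase] at hl
      exact hl.1 ((Nat.prime_dvd_prime_iff_eq hpp (hp l (hT hl.2))).1 hpl).symm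
  · intro l hl
    have e : ψ l ^ l = 1 := by
      have := pow_orderOf_eq_one (ψ l)
      rwa [hψ l (hT (Finset.mem_of_mem_erase hl))] at this
    rw [← Finset.mul_prod_erase _ _ hl, pow_mul, ← pow_mul (ψ l), mul_comm (j l), pow_mul (ψ l),
      e, one_pow, one_pow]

lemma exists_primeOrder_chars : ∃ ψ : ℕ → MulChar K ℂ,
    ∀ p ∈ (Fintype.card K - 1).primeFactors, orderOf (ψ p) = p := by
  have : ∀ p ∈ (Fintype.card K - 1).primeFactors, ∃ χ : MulChar K ℂ, orderOf χ = p := fun p hp ↦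
    MulChar.exists_mulChar_orderOf K (Nat.dvd_of_mem_primeFactors hp)
      (Complex.isPrimitiveRoot_exp p (Nat.prime_of_mem_primeFactors hp).ne_zero)
  choose! ψ hψ using this
  exact ⟨ψ, hψ⟩

/-- An element at which no character of prime order takes the value `1` is not a `p`-th power for
any prime `p` dividing the order of `Kˣ`, so it generates `Kˣ`. -/
lemma isPrimitiveElement_of_forall_ne_one {ψ : ℕ → MulChar K ℂ}
    (hψ : ∀ p ∈ (Fintype.card K - 1).primeFactors, orderOf (ψ p) = p) {x : K} (hx : x ≠ 0)
    (h : ∀ p ∈ (Fintype.card K - 1).primeFactors, ψ p x ≠ 1) : IsPrimitiveElement x := by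
  classical
  obtain ⟨g, hg⟩ := IsCyclic.exists_generator (α := Kˣ)
  have hcard : Fintype.card Kˣ = Fintype.card K - 1 := Fintype.card_units K
  have hpow : ∀ u : Kˣ, ∃ m : ℕ, u = g ^ m := fun u ↦ by
    obtain ⟨m, hm⟩ := (mem_powers_iff_mem_zpowers.2 (hg u)); exact ⟨m, hm.symm⟩
  obtain ⟨m, hm⟩ := hpow (Units.mk0 x hx)
  have hog : orderOf g = Fintype.card K - 1 := by
    rw [orderOf_eq_card_of_forall_mem_zpowers hg, Nat.card_eq_fintype_card, hcard]
  have hcop : Nat.Coprime (Fintype.card K - 1) m := by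
    refine Nat.coprime_of_dvd fun p hp hp1 hp2 ↦ ?_
    have hpm : p ∈ (Fintype.card K - 1).primeFactors :=
      Nat.mem_primeFactors.2 ⟨hp, hp1, by have := Fintype.one_lt_card (α := K); omega⟩
    apply h p hpm
    obtain ⟨c, rfl⟩ := hp2
    have hxe : x = ((g ^ c : Kˣ) : K) ^ p := by
      rw [← Units.val_pow_eq_pow_val, ← pow_mul, mul_comm c, ← hm]; rfl
    have e := pow_orderOf_eq_one (ψ p)
    rw [hψ p hpm] at e
    rw [hxe, map_pow, ← MulChar.pow_apply' _ hp.ne_zero, e, MulChar.one_apply (Units.isUnit _)]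
  have hou : orderOf (Units.mk0 x hx) = Nat.card Kˣ := by
    rw [hm, Nat.Coprime.orderOf_pow (hog ▸ hcop), hog, Nat.card_eq_fintype_card, hcard]
  refine ⟨hx, fun β hβ ↦ ?_⟩
  have hmem : Units.mk0 β hβ ∈ Submonoid.powers (Units.mk0 x hx) := by
    rw [mem_powers_iff_mem_zpowers,
      Subgroup.eq_top_of_card_eq (Subgroup.zpowers (Units.mk0 x hx)) (by rw [Nat.card_zpowers, hou])]
    trivial
  obtain ⟨k, hk⟩ := hmem
  exact ⟨k, by simpa using (congrArg Units.val hk).symm⟩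

end Sieve

/-! ### Primitive elements with prescribed trace -/

section Cohen
variable {F K : Type*} [Field F] [Field K] [Algebra F K] [Fintype F] [Fintype K]

omit [Fintype F] in
/-- The sieve applied to a trace fibre: `E T` bounds the sums over the fibre of the nontrivial
products of powers of the characters of order `p`, for `p ∈ T`. -/
lemma exists_primitive_of_sum_lt {b : F} (hb : b ≠ 0) {M : ℕ} [DecidableEq F]
    (hM : M = #{x : K | Algebra.trace F K x = b}) (E : Finset ℕ → ℝ)
    (hE : ∀ ψ : ℕ → MulChar K ℂ, (∀ p ∈ (Fintype.card K - 1).primeFactors, orderOf (ψ p) = p) →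
      ∀ T ⊆ (Fintype.card K - 1).primeFactors, T.Nonempty → ∀ j : ℕ → ℕ,
      ∏ p ∈ T, ψ p ^ j p ≠ 1 → ‖traceSum F (∏ p ∈ T, ψ p ^ j p) b‖ ≤ E T)
    (h : ∑ T ∈ (Fintype.card K - 1).primeFactors.powerset.erase ∅, E T < M) :
    ∃ x : K, IsPrimitiveElement x ∧ Algebra.trace F K x = b := by
  classical
  obtain ⟨ψ, hψ⟩ := exists_primeOrder_chars (K := K)
  have hp : ∀ p ∈ (Fintype.card K - 1).primeFactors, p.Prime :=
    fun p ↦ Nat.prime_of_mem_primeFactors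
  have h0 : (0 : K) ∉ ({x : K | Algebra.trace F K x = b} : Finset K) := by
    simpa using hb.symm
  obtain ⟨x, hx, hx'⟩ := exists_forall_ne_one_of_sum_lt _ ψ hp _ h0 E (fun T hT hne j hj ↦ by
    convert hE ψ hψ T hT hne j (prod_pow_ne_one hp hψ hT hne hj) using 2
    rw [traceSum]
    congr!) (by rw [← hM]; exact h)
  exact ⟨x, isPrimitiveElement_of_forall_ne_one hψ (fun h ↦ h0 (h ▸ hx)) hx', by simpa using hx⟩

/-- Cohen's theorem when the number `2 ^ ω` of squarefree divisors of `|K| - 1` is at most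
`√(|K| / |F|)`. -/
lemma exists_primitive_of_four_pow_le {N : ℕ} (hN : N * Fintype.card F = Fintype.card K)
    (hω : 4 ^ #(Fintype.card K - 1).primeFactors ≤ N) {b : F} (hb : b ≠ 0) :
    ∃ x : K, IsPrimitiveElement x ∧ Algebra.trace F K x = b := by
  classical
  have hM : N = #{x : K | Algebra.trace F K x = b} :=
    (Nat.eq_of_mul_eq_mul_right Fintype.card_pos ((card_trace_fiber (K := K) b).trans hN.symm)).symm
  have hNpos : 0 < (N : ℝ) := by
    have : 0 < N := lt_of_lt_of_le (by positivity) hω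
    exact_mod_cast this
  refine exists_primitive_of_sum_lt hb hM (fun _ ↦ √N) ?_ ?_
  · intro ψ _ T _ _ j h1
    exact Real.le_sqrt_of_sq_le (norm_sq_traceSum_le h1 hN hb)
  · rw [Finset.sum_const, Finset.card_erase_of_mem (Finset.empty_mem_powerset _),
      Finset.card_powerset, nsmul_eq_mul, Nat.cast_sub Nat.one_le_two_pow]
    push_cast
    have h2 : (2 : ℝ) ^ #(Fintype.card K - 1).primeFactors ≤ √N := by
      refine Real.le_sqrt_of_sq_le ?_
      rw [← pow_mul, mul_comm, pow_mul]
      norm_num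
      exact_mod_cast hω
    have h3 : √(N : ℝ) * √N = N := Real.mul_self_sqrt hNpos.le
    have h4 : 0 < √(N : ℝ) := Real.sqrt_pos.2 hNpos
    nlinarith

omit [Fintype F] in
/-- A character whose order divides `(|K| - 1) / (|F| - 1)` is trivial on `Fˣ`, since the elements
of `Fˣ` are exactly the powers with that exponent. -/
lemma eq_one_of_pow_eq_one [Finite F] {χ : MulChar K ℂ} {m : ℕ} (hχ : χ ^ m = 1)
    (hm : m * (Nat.card F - 1) = Nat.card K - 1) {c : F} (hc : c ≠ 0) :
    χ (algebraMap F K c) = 1 := by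
  classical
  have := Fintype.ofFinite F
  have hQ := Fintype.one_lt_card (α := F)
  have hK := Fintype.one_lt_card (α := K)
  rw [Nat.card_eq_fintype_card, Nat.card_eq_fintype_card] at hm
  have hm0 : m ≠ 0 := by rintro rfl; omega
  obtain ⟨g, hg⟩ := IsCyclic.exists_generator (α := Kˣ)
  have hcK : algebraMap F K c ≠ 0 := by simpa using hc
  obtain ⟨k, hk⟩ := mem_powers_iff_mem_zpowers.2 (hg (Units.mk0 _ hcK))
  have hog : orderOf g = Fintype.card K - 1 := by
    rw [orderOf_eq_card_of_forall_mem_zpowers hg, Nat.card_eq_fintype_card, Fintype.card_units]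
  have h1 : g ^ (k * (Fintype.card F - 1)) = 1 := by
    rw [pow_mul]
    ext
    have : (g ^ k : Kˣ) = Units.mk0 _ hcK := hk
    rw [this, Units.val_pow_eq_pow_val, Units.val_mk0, ← map_pow,
      FiniteField.pow_card_sub_one_eq_one c hc, map_one, Units.val_one]
  have h2 := orderOf_dvd_of_pow_eq_one h1
  rw [hog, ← hm] at h2
  obtain ⟨l, rfl⟩ := Nat.dvd_of_mul_dvd_mul_right (by omega) h2
  have h3 : algebraMap F K c = ((g ^ l : Kˣ) : K) ^ m := by
    rw [← Units.val_pow_eq_pow_val, ← pow_mul, mul_comm l]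
    exact (congrArg Units.val hk).symm
  rw [h3, map_pow, ← MulChar.pow_apply' _ hm0, hχ, MulChar.one_apply (Units.isUnit _)]

/-- Cohen's theorem for `𝔽_{3¹²} / 𝔽_{3⁶}`. Here `3¹² - 1 = 2⁴·5·7·13·73`, and products of
characters of orders `2`, `5`, `73` are trivial on `Fˣ` because these primes divide `3⁶ + 1`. The sieve
then loses at most `7 · 1 + 24 · 27 = 655 < 729`. -/
lemma exists_primitive_three_six (hF : Fintype.card F = 3 ^ 6) (hK : Fintype.card K = 3 ^ 12)
    {b : F} (hb : b ≠ 0) :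
    ∃ x : K, IsPrimitiveElement x ∧ Algebra.trace F K x = b := by
  classical
  have hN : 729 * Fintype.card F = Fintype.card K := by rw [hF, hK]; norm_num
  have hM : 729 = #{x : K | Algebra.trace F K x = b} :=
    (Nat.eq_of_mul_eq_mul_right Fintype.card_pos ((card_trace_fiber (K := K) b).trans hN.symm)).symm
  have hP : (Fintype.card K - 1).primeFactors = {2, 5, 7, 13, 73} := by
    rw [hK, show 3 ^ 12 - 1 = 2 ^ 4 * (5 * (7 * (13 * 73))) by norm_num]
    rw [Nat.primeFactors_mul (by norm_num) (by norm_num), Nat.primeFactors_mul (by norm_num)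
      (by norm_num), Nat.primeFactors_mul (by norm_num) (by norm_num), Nat.primeFactors_mul
      (by norm_num) (by norm_num), Nat.primeFactors_prime_pow (by norm_num) (by norm_num),
      Nat.Prime.primeFactors (by norm_num), Nat.Prime.primeFactors (by norm_num),
      Nat.Prime.primeFactors (by norm_num), Nat.Prime.primeFactors (by norm_num)]
    rfl
  refine exists_primitive_of_sum_lt hb hM
    (fun T ↦ ((if T ⊆ {2, 5, 73} then 1 else 27 : ℕ) : ℝ)) ?_ ?_
  · intro ψ hψ T hT _ j h1
    split_ifs with hs
    · have htriv : ∀ c : F, c ≠ 0 → (∏ p ∈ T, ψ p ^ j p) (algebraMap F K c) = 1 := by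
        intro c hc
        refine eq_one_of_pow_eq_one (m := 730) ?_ ?_ hc
        · rw [← Finset.prod_pow]
          refine Finset.prod_eq_one fun p hp ↦ ?_
          have h730 : p ∣ 730 := by
            have := hs hp
            simp only [mem_insert, mem_singleton] at this
            rcases this with rfl | rfl | rfl <;> norm_num
          have h7 : ψ p ^ 730 = 1 := orderOf_dvd_iff_pow_eq_one.1 (by rwa [hψ p (hT hp)])
          rw [← pow_mul, mul_comm, pow_mul, h7, one_pow]
        · rw [Nat.card_eq_fintype_card, Nat.card_eq_fintype_card, hF, hK]; norm_num
      have h2 := norm_sq_traceSum_of_trivial h1 hN hb htriv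
      rw [hF] at h2
      push_cast at h2 ⊢
      nlinarith [norm_nonneg (traceSum F (∏ p ∈ T, ψ p ^ j p) b)]
    · have h2 := norm_sq_traceSum_le h1 hN hb
      norm_num at h2 ⊢
      nlinarith [norm_nonneg (traceSum F (∏ p ∈ T, ψ p ^ j p) b)]
  · rw [hP, ← Nat.cast_sum]
    exact_mod_cast (by decide : ∑ T ∈ ({2, 5, 7, 13, 73} : Finset ℕ).powerset.erase ∅,
      (if T ⊆ {2, 5, 73} then 1 else 27 : ℕ) < 729)

omit [Fintype K] in
/-- The proportion of elements of `A` at which a character of prime order `p` takes the value `1`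
is close to `1 / p` as soon as the sums over `A` of its nontrivial powers are small. -/
lemma card_filter_eq_one_le {p : ℕ} (hp : p.Prime) {χ : MulChar K ℂ} (hχ : orderOf χ = p)
    (A : Finset K) (hA : (0 : K) ∉ A) {B : ℝ}
    (hB : ∀ ξ : MulChar K ℂ, ξ ≠ 1 → ξ ^ p = 1 → ‖∑ x ∈ A, ξ x‖ ≤ B) [DecidableEq ℂ] :
    p * (#{x ∈ A | χ x = 1} : ℝ) ≤ #A + (p - 1) * B := by
  have h1 : (p : ℂ) * #{x ∈ A | χ x = 1} = ∑ x ∈ A, ∑ j ∈ range p, χ x ^ j := by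
    rw [Finset.card_filter, Nat.cast_sum, Finset.mul_sum]
    refine Finset.sum_congr rfl fun x hx ↦ ?_
    split_ifs with h
    · simp [h]
    · have hx0 : x ≠ 0 := fun h0 ↦ hA (h0 ▸ hx)
      have : χ x ^ p = 1 := by
        rw [← MulChar.pow_apply' _ hp.ne_zero, ← hχ, pow_orderOf_eq_one,
          MulChar.one_apply hx0.isUnit]
      have h3 := geom_sum_mul (χ x) p
      rw [this, sub_self] at h3
      simpa using ((mul_eq_zero.1 h3).resolve_right (sub_ne_zero.2 h)).symm
  obtain ⟨m, rfl⟩ : ∃ m, p = m + 1 := ⟨p - 1, (Nat.succ_pred_eq_of_pos hp.pos).symm⟩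
  rw [Finset.sum_comm, Finset.sum_range_succ'] at h1
  have h2 : ‖∑ j ∈ range m, ∑ x ∈ A, χ x ^ (j + 1)‖ ≤ m * B := by
    refine (norm_sum_le_of_le _ fun j hj ↦ ?_).trans
      (by rw [Finset.sum_const, card_range, nsmul_eq_mul])
    have h3 := hB (χ ^ (j + 1)) ?_ ?_
    · rwa [Finset.sum_congr rfl fun x _ ↦ MulChar.pow_apply' χ j.succ_ne_zero x] at h3
    · intro h
      have := Nat.le_of_dvd j.succ_pos (orderOf_dvd_of_pow_eq_one h)
      rw [hχ] at this
      simp at hj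
      omega
    · rw [← pow_mul, mul_comm, pow_mul, ← hχ, pow_orderOf_eq_one, one_pow]
  have h4 := congrArg norm h1
  rw [norm_mul, Complex.norm_natCast, Complex.norm_natCast] at h4
  rw [h4]
  refine (norm_add_le _ _).trans ?_
  have h5 : ‖∑ x ∈ A, χ x ^ 0‖ = #A := by simp
  rw [h5]
  push_cast
  linarith

/-- Cohen's theorem for `𝔽_{2¹²} / 𝔽_{2⁶}`, by a union bound over the primes `3`, `5`, `7`, `13`
dividing `2¹² - 1`; the characters of orders `5` and `13` are trivial on `Fˣ` because these primes
divide `2⁶ + 1`. -/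
lemma exists_primitive_two_six (hF : Fintype.card F = 2 ^ 6) (hK : Fintype.card K = 2 ^ 12)
    {b : F} (hb : b ≠ 0) :
    ∃ x : K, IsPrimitiveElement x ∧ Algebra.trace F K x = b := by
  classical
  have hN : 64 * Fintype.card F = Fintype.card K := by rw [hF, hK]; norm_num
  have hM : 64 = #{x : K | Algebra.trace F K x = b} :=
    (Nat.eq_of_mul_eq_mul_right Fintype.card_pos ((card_trace_fiber (K := K) b).trans hN.symm)).symm
  have hP : (Fintype.card K - 1).primeFactors = {3, 5, 7, 13} := by
    rw [hK, show 2 ^ 12 - 1 = 3 ^ 2 * (5 * (7 * 13)) by norm_num]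
    rw [Nat.primeFactors_mul (by norm_num) (by norm_num), Nat.primeFactors_mul (by norm_num)
      (by norm_num), Nat.primeFactors_mul (by norm_num) (by norm_num),
      Nat.primeFactors_prime_pow (by norm_num) (by norm_num),
      Nat.Prime.primeFactors (by norm_num), Nat.Prime.primeFactors (by norm_num),
      Nat.Prime.primeFactors (by norm_num)]
    rfl
  obtain ⟨ψ, hψ⟩ := exists_primeOrder_chars (K := K)
  set A : Finset K := {x : K | Algebra.trace F K x = b} with hA
  have hA0 : (0 : K) ∉ A := by simpa [hA] using hb.symm
  have hAcard : (#A : ℝ) = 64 := by exact_mod_cast hM.symm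
  have hgen : ∀ ξ : MulChar K ℂ, ξ ≠ 1 → ‖∑ x ∈ A, ξ x‖ ≤ 8 := by
    intro ξ h1
    have h2 : ‖∑ x ∈ A, ξ x‖ ^ 2 ≤ (64 : ℕ) := norm_sq_traceSum_le h1 hN hb
    push_cast at h2
    nlinarith [norm_nonneg (∑ x ∈ A, ξ x)]
  have htriv : ∀ ξ : MulChar K ℂ, ξ ≠ 1 → ξ ^ 65 = 1 → ‖∑ x ∈ A, ξ x‖ ≤ 1 := by
    intro ξ h1 h65
    have h2 : Fintype.card F * ‖∑ x ∈ A, ξ x‖ ^ 2 = (64 : ℕ) :=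
      norm_sq_traceSum_of_trivial h1 hN hb fun c hc ↦ eq_one_of_pow_eq_one (m := 65) h65
        (by rw [Nat.card_eq_fintype_card, Nat.card_eq_fintype_card, hF, hK]; norm_num) hc
    rw [hF] at h2
    push_cast at h2
    nlinarith [norm_nonneg (∑ x ∈ A, ξ x)]
  have h3 := card_filter_eq_one_le (by norm_num) (hψ 3 (by simp [hP])) A hA0
    (fun ξ h _ ↦ hgen ξ h)
  have h7 := card_filter_eq_one_le (by norm_num) (hψ 7 (by simp [hP])) A hA0
    (fun ξ h _ ↦ hgen ξ h)
  have h5 := card_filter_eq_one_le (by norm_num) (hψ 5 (by simp [hP])) A hA0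
    (fun ξ h h' ↦ htriv ξ h (by rw [show 65 = 5 * 13 by norm_num, pow_mul, h', one_pow]))
  have h13 := card_filter_eq_one_le (by norm_num) (hψ 13 (by simp [hP])) A hA0
    (fun ξ h h' ↦ htriv ξ h (by rw [show 65 = 13 * 5 by norm_num, pow_mul, h', one_pow]))
  rw [hAcard] at h3 h5 h7 h13
  by_contra! hcon
  have hcov : A ⊆ (Finset.biUnion {3, 5, 7, 13} fun p ↦ {x ∈ A | ψ p x = 1}) := by
    intro x hx
    by_contra h
    simp only [mem_biUnion, not_exists, not_and, mem_filter] at h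
    refine hcon x (isPrimitiveElement_of_forall_ne_one hψ (fun h0 ↦ hA0 (h0 ▸ hx)) ?_) ?_
    · intro p hp
      rw [hP] at hp
      exact h p hp hx
    · simpa [hA] using hx
  have hle := (card_le_card hcov).trans card_biUnion_le
  rw [Finset.sum_insert (by decide), Finset.sum_insert (by decide), Finset.sum_insert (by decide),
    Finset.sum_singleton] at hle
  have hle' : (#A : ℝ) ≤ #{x ∈ A | ψ 3 x = 1} + (#{x ∈ A | ψ 5 x = 1} +
      (#{x ∈ A | ψ 7 x = 1} + #{x ∈ A | ψ 13 x = 1})) := by exact_mod_cast hle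
  rw [hAcard] at hle'
  push_cast at h3 h5 h7 h13
  linarith

end Cohen

/-! ### The number of prime divisors of `Q ^ r - 1` -/

section Numerics

/-- A bound for the number of prime divisors: comparing the prime divisors of `N` with a finite set
`S` containing all primes below `B`, each prime divisor outside `S` is at least `B` and each element
of `S` that is missing is at most `B`. -/
lemma pow_card_primeFactors_mul_prod_le {N B : ℕ} (hN : N ≠ 0) (S : Finset ℕ)
    (hS : ∀ p ∈ S, p ≤ B) (hS' : ∀ p, p.Prime → p ∉ S → B ≤ p) :
    B ^ #N.primeFactors * ∏ p ∈ S, p ≤ B ^ #S * N := by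
  set W := N.primeFactors with hW
  have h1 : ∏ p ∈ W, p ≤ N :=
    Nat.le_of_dvd (Nat.pos_of_ne_zero hN) (Nat.prod_primeFactors_dvd N)
  rw [← Finset.prod_inter_mul_prod_sdiff W S] at h1
  rw [← Finset.prod_inter_mul_prod_sdiff S W, ← Finset.card_inter_add_card_sdiff W S,
    ← Finset.card_inter_add_card_sdiff S W, Finset.inter_comm S W, pow_add, pow_add]
  have h2 : B ^ #(W \ S) ≤ ∏ p ∈ W \ S, p := by
    refine Finset.pow_card_le_prod _ _ _ fun p hp ↦ ?_
    rw [mem_sdiff] at hp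
    exact hS' p (Nat.prime_of_mem_primeFactors hp.1) hp.2
  have h3 : ∏ p ∈ S \ W, p ≤ B ^ #(S \ W) :=
    Finset.prod_le_pow_card _ _ _ fun p hp ↦ hS p (mem_sdiff.1 hp).1
  calc B ^ #(W ∩ S) * B ^ #(W \ S) * ((∏ p ∈ W ∩ S, p) * ∏ p ∈ S \ W, p)
      ≤ B ^ #(W ∩ S) * (∏ p ∈ W \ S, p) * ((∏ p ∈ W ∩ S, p) * B ^ #(S \ W)) := by gcongr
    _ = B ^ #(W ∩ S) * B ^ #(S \ W) * ((∏ p ∈ W ∩ S, p) * ∏ p ∈ W \ S, p) := by ring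
    _ ≤ _ := by gcongr

/-- The primes below `64`. -/
def smallPrimes : Finset ℕ := {2, 3, 5, 7, 11, 13, 17, 19, 23, 29, 31, 37, 41, 43, 47, 53, 59, 61}

lemma mem_smallPrimes_of_lt {p : ℕ} (hp : p.Prime) (h : p < 64) : p ∈ smallPrimes := by
  unfold smallPrimes
  interval_cases p <;> first | decide | (exfalso; revert hp; norm_num)

/-- The product of the primes below `64`. -/
def smallProd : ℕ := 117288381359406970983270

lemma prod_smallPrimes : ∏ p ∈ smallPrimes, p = smallProd := by decide +kernel

/-- A kernel-checkable criterion for `4 ^ ω(N) ≤ Y`: split off from `N` the part `g` composed of the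
primes below `64`; the cofactor `M`, which is checked to have no prime divisor below `64`, has at
most `⌊log₆₄ M⌋` prime divisors. -/
def omegaCheck (N Y : ℕ) : Bool :=
  let g := Nat.gcd N (smallProd ^ 64)
  let M := N / g
  let t := Nat.log2 M / 6
  Nat.gcd M smallProd == 1 && decide (M < 64 ^ (t + 1)) &&
    decide (4 ^ (#{p ∈ smallPrimes | N % p = 0} + t) ≤ Y)

lemma four_pow_le_of_omegaCheck {N Y : ℕ} (hN : N ≠ 0) (h : omegaCheck N Y = true) :
    4 ^ #N.primeFactors ≤ Y := by
  simp only [omegaCheck, Bool.and_eq_true, beq_iff_eq, decide_eq_true_eq] at h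
  obtain ⟨⟨h1, h2⟩, h3⟩ := h
  set g := Nat.gcd N (smallProd ^ 64) with hg
  set M := N / g with hM
  set t := Nat.log2 M / 6
  have hgN : g * M = N := Nat.mul_div_cancel' (Nat.gcd_dvd_left _ _)
  have hM0 : M ≠ 0 := by rintro h; rw [h, mul_zero] at hgN; exact hN hgN.symm
  have hsub : N.primeFactors ⊆ {p ∈ smallPrimes | N % p = 0} ∪ M.primeFactors := by
    intro p hp
    have hpp := Nat.prime_of_mem_primeFactors hp
    have hpN := Nat.dvd_of_mem_primeFactors hp
    rw [mem_union, mem_filter]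
    rw [← hgN, hpp.dvd_mul] at hpN
    rcases hpN with h | h
    · have h4 : p ∣ smallProd := hpp.dvd_of_dvd_pow (h.trans (Nat.gcd_dvd_right _ _))
      rw [← prod_smallPrimes, hpp.prime.dvd_finsetProd_iff] at h4
      obtain ⟨l, hl, hpl⟩ := h4
      have : l ∈ smallPrimes → l.Prime := by
        intro hl
        simp only [smallPrimes, mem_insert, mem_singleton] at hl
        rcases hl with rfl|rfl|rfl|rfl|rfl|rfl|rfl|rfl|rfl|rfl|rfl|rfl|rfl|rfl|rfl|rfl|rfl|rfl <;>
          norm_num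
      rw [(Nat.prime_dvd_prime_iff_eq hpp (this hl)).1 hpl]
      rw [(Nat.prime_dvd_prime_iff_eq hpp (this hl)).1 hpl] at hp
      exact Or.inl ⟨hl, Nat.mod_eq_zero_of_dvd (Nat.dvd_of_mem_primeFactors hp)⟩
    · exact Or.inr (Nat.mem_primeFactors.2 ⟨hpp, h, hM0⟩)
  have h4 : #M.primeFactors ≤ t := by
    have h5 : 64 ^ #M.primeFactors ≤ M := by
      refine le_trans (Finset.pow_card_le_prod _ _ _ fun p hp ↦ ?_)
        (Nat.le_of_dvd (Nat.pos_of_ne_zero hM0) (Nat.prod_primeFactors_dvd M))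
      have hpp := Nat.prime_of_mem_primeFactors hp
      by_contra! hlt
      have h6 : p ∣ smallProd := prod_smallPrimes ▸ Finset.dvd_prod_of_mem (fun p ↦ p)
        (mem_smallPrimes_of_lt hpp hlt)
      have := Nat.dvd_gcd (Nat.dvd_of_mem_primeFactors hp) h6
      rw [h1] at this
      exact hpp.one_lt.ne' (Nat.dvd_one.1 this)
    exact Nat.lt_succ_iff.1 ((Nat.pow_lt_pow_iff_right (by norm_num)).1 (h5.trans_lt h2))
  refine le_trans (Nat.pow_le_pow_right (by norm_num) ?_) h3
  exact (card_le_card hsub).trans ((card_union_le _ _).trans (by gcongr))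

lemma omegaCheck_small : ∀ q ∈ Icc 2 37, ∀ L ∈ Icc 6 31, q ^ L ≤ 2766843143 →
    (q, L) ≠ (2, 6) → (q, L) ≠ (3, 6) →
    omegaCheck ((q ^ L) ^ 2 - 1) (q ^ L) = true := by
  decide +kernel

lemma omegaCheck_cubic : ∀ L ∈ Icc 6 9,
    omegaCheck ((2 ^ L) ^ 3 - 1) ((2 ^ L) ^ 2) = true := by
  decide +kernel

/-- The number of prime divisors of `Q ^ r - 1`, where `Q = q ^ L`, is small compared with
`Q ^ (r - 1)`. -/
lemma four_pow_card_primeFactors_le {q L r : ℕ} (hq : 2 ≤ q) (hL : 6 ≤ L) (hr : 2 ≤ r)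
    (h2 : (q, L, r) ≠ (2, 6, 2)) (h3 : (q, L, r) ≠ (3, 6, 2)) :
    4 ^ #((q ^ L) ^ r - 1).primeFactors ≤ (q ^ L) ^ (r - 1) := by
  have h64 : 64 ≤ q ^ L := (Nat.pow_le_pow_right (by norm_num) hL).trans (Nat.pow_le_pow_left hq L)
  have hN0 : (q ^ L) ^ r - 1 ≠ 0 := by
    have : 64 ^ 1 ≤ (q ^ L) ^ r :=
      (Nat.pow_le_pow_left h64 1).trans (Nat.pow_le_pow_right (by omega) (by omega))
    omega
  obtain ⟨s, rfl⟩ : ∃ s, r = s + 2 := ⟨r - 2, by omega⟩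
  rcases Nat.eq_zero_or_pos s with rfl | hs
  · -- quadratic extensions: the constant is `64 ^ 18 / smallProd` rounded up
    by_cases hbig : 2766843143 ≤ q ^ L
    · have h := pow_card_primeFactors_mul_prod_le (B := 64) hN0 smallPrimes
        (by decide) (fun p hp hpS ↦ by by_contra! hlt; exact hpS (mem_smallPrimes_of_lt hp hlt))
      rw [prod_smallPrimes] at h
      have hc : #smallPrimes = 18 := by decide
      rw [hc] at h
      have h5 : 64 ^ #((q ^ L) ^ (0 + 2) - 1).primeFactors * smallProd ≤
          (q ^ L) ^ 3 * smallProd := by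
        refine h.trans ?_
        calc 64 ^ 18 * ((q ^ L) ^ (0 + 2) - 1) ≤ (2766843143 * smallProd) * (q ^ L) ^ 2 := by
              gcongr
              · decide +kernel
              · exact Nat.sub_le _ _
          _ ≤ (q ^ L * smallProd) * (q ^ L) ^ 2 := by gcongr
          _ = _ := by ring
      have h6 := Nat.le_of_mul_le_mul_right h5 (by decide)
      rw [show 64 = 4 ^ 3 by norm_num, ← pow_mul, mul_comm, pow_mul] at h6
      simpa using (Nat.pow_le_pow_iff_left (by norm_num)).1 h6
    · push Not at hbig
      have hq' : q ≤ 37 := by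
        by_contra! h
        have : 38 ^ 6 ≤ q ^ L := (Nat.pow_le_pow_left h 6).trans
          (Nat.pow_le_pow_right (by omega) hL)
        norm_num at this
        omega
      have hL' : L ≤ 31 := by
        by_contra! h
        have : 2 ^ 32 ≤ q ^ L := (Nat.pow_le_pow_right (by norm_num) h).trans
          (Nat.pow_le_pow_left hq L)
        norm_num at this
        omega
      have := omegaCheck_small q (mem_Icc.2 ⟨hq, hq'⟩) L (mem_Icc.2 ⟨hL, hL'⟩) hbig.le
        (by intro h; apply h2; simp_all) (by intro h; apply h3; simp_all)
      simpa using four_pow_le_of_omegaCheck hN0 this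
  · -- higher degree: the constant is `16 ^ 6 / (2 * 3 * 5 * 7 * 11 * 13)` rounded up
    by_cases hbig : 559 ≤ (q ^ L) ^ s
    · have h := pow_card_primeFactors_mul_prod_le (B := 16) hN0 {2, 3, 5, 7, 11, 13}
        (by decide) (fun p hp hpS ↦ by
          by_contra! hlt
          interval_cases p <;> first | exact hpS (by decide) | (revert hp; norm_num))
      have h5 : 16 ^ #((q ^ L) ^ (s + 2) - 1).primeFactors * 30030 ≤
          (q ^ L) ^ (2 * (s + 1)) * 30030 := by
        refine h.trans ?_
        calc 16 ^ 6 * ((q ^ L) ^ (s + 2) - 1) ≤ (559 * 30030) * (q ^ L) ^ (s + 2) := by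
              gcongr
              · norm_num
              · exact Nat.sub_le _ _
          _ ≤ ((q ^ L) ^ s * 30030) * (q ^ L) ^ (s + 2) := by gcongr
          _ = _ := by ring
      have h6 := Nat.le_of_mul_le_mul_right h5 (by decide)
      rw [show 16 = 4 ^ 2 by norm_num, ← pow_mul, mul_comm, pow_mul, mul_comm 2, pow_mul _ _ 2]
        at h6
      exact (Nat.pow_le_pow_iff_left (by norm_num)).1 h6
    · push Not at hbig
      have hs1 : s = 1 := by
        by_contra h
        have : 64 ^ 2 ≤ (q ^ L) ^ s := (Nat.pow_le_pow_left h64 2).trans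
          (Nat.pow_le_pow_right (by omega) (by omega))
        omega
      subst hs1
      rw [pow_one] at hbig
      have hq2 : q = 2 := by
        by_contra h
        have : 3 ^ 6 ≤ q ^ L := (Nat.pow_le_pow_left (by omega : 3 ≤ q) 6).trans
          (Nat.pow_le_pow_right (by omega) hL)
        omega
      subst hq2
      have hL' : L ≤ 9 := by
        by_contra! h
        have : 2 ^ 10 ≤ 2 ^ L := Nat.pow_le_pow_right (by norm_num) h
        omega
      exact four_pow_le_of_omegaCheck hN0 (omegaCheck_cubic L (mem_Icc.2 ⟨hL, hL'⟩))

end Numerics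

/-! ### The Chinese remainder theorem for moduli that are not coprime -/

section ChineseRemainder
variable {R : Type*} [CommRing R]

/-- Distributivity of the ideal lattice of a principal ideal domain, in the form of a criterion for
solving `x ≡ 0` modulo `a` and `b`, and `x ≡ y` modulo `c`. -/
lemma exists_dvd_dvd_dvd_sub [IsDomain R] [IsPrincipalIdealRing R] {a b c y : R} (ha : a ≠ 0)
    (hac : ∃ x, a ∣ x ∧ c ∣ x - y) (hbc : ∃ x, b ∣ x ∧ c ∣ x - y) :
    ∃ x, a ∣ x ∧ b ∣ x ∧ c ∣ x - y := by
  obtain ⟨g, hg⟩ := (IsPrincipalIdealRing.principal (Ideal.span {a, b})).principal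
  replace hg : Ideal.span {a, b} = Ideal.span {g} := hg
  have hga : a ∈ Ideal.span {g} := hg ▸ Ideal.subset_span (by simp)
  have hgb : b ∈ Ideal.span {g} := hg ▸ Ideal.subset_span (by simp)
  have hgg : g ∈ Ideal.span {a, b} := hg ▸ Ideal.mem_span_singleton_self g
  rw [Ideal.mem_span_singleton] at hga hgb
  obtain ⟨a', rfl⟩ := hga
  obtain ⟨b', rfl⟩ := hgb
  obtain ⟨s, t, hst⟩ := Ideal.mem_span_pair.1 hgg
  have hg0 : g ≠ 0 := left_ne_zero_of_mul ha
  have hst' : s * a' + t * b' = 1 := mul_left_cancel₀ hg0 (by linear_combination hst)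
  obtain ⟨_, ⟨u, rfl⟩, w, hu⟩ := hac
  obtain ⟨_, ⟨v, rfl⟩, z, hv⟩ := hbc
  refine ⟨g * a' * b' * (s * v + t * u), ⟨b' * (s * v + t * u), by ring⟩,
    ⟨a' * (s * v + t * u), by ring⟩, ⟨s * a' * z + t * b' * w, ?_⟩⟩
  linear_combination s * a' * hv + t * b' * hu + y * hst'

/-- The extension of `exists_dvd_dvd_dvd_sub` from two moduli `a`, `b` to a finite family, by
replacing part of the family by its least common multiple. -/
lemma exists_forall_dvd_dvd_sub [IsDomain R] [IsPrincipalIdealRing R] {ι : Type*} (e : ι → R)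
    (he : ∀ i, e i ≠ 0) (s : Finset ι) {c y : R} (h : ∀ i ∈ s, ∃ x, e i ∣ x ∧ c ∣ x - y) :
    ∃ x, (∀ i ∈ s, e i ∣ x) ∧ c ∣ x - y := by
  classical
  induction s using Finset.induction_on with
  | empty => exact ⟨y, by simp⟩
  | insert i s hi ih =>
    obtain ⟨x, hx, hcx⟩ := ih fun j hj ↦ h j (mem_insert_of_mem hj)
    obtain ⟨l, hl⟩ := (IsPrincipalIdealRing.principal (⨅ j ∈ s, Ideal.span {e j})).principal
    have hl' : ∀ z, l ∣ z ↔ ∀ j ∈ s, e j ∣ z := fun z ↦ by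
      have : z ∈ (⨅ j ∈ s, Ideal.span {e j}) ↔ z ∈ Ideal.span {l} := by rw [hl]
      simpa [Submodule.mem_iInf, Ideal.mem_span_singleton] using this.symm
    obtain ⟨x', h1, h2, h3⟩ := exists_dvd_dvd_dvd_sub (he i) (h i (mem_insert_self _ _))
      ⟨x, (hl' x).2 hx, hcx⟩
    refine ⟨x', fun j hj ↦ ?_, h3⟩
    rcases mem_insert.1 hj with rfl | hj
    · exact h1
    · exact (hl' x').1 h2 j hj

/-- The Chinese remainder theorem for moduli that need not be coprime: pairwise compatible
congruences have a common solution. -/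
lemma exists_forall_dvd_sub [IsDomain R] [IsPrincipalIdealRing R] {ι : Type*} (e A : ι → R)
    (he : ∀ i, e i ≠ 0) (h : ∀ i j, A i - A j ∈ Ideal.span {e i, e j}) (s : Finset ι) :
    ∃ B, ∀ i ∈ s, e i ∣ B - A i := by
  classical
  induction s using Finset.induction_on with
  | empty => exact ⟨0, by simp⟩
  | insert j s hj ih =>
    obtain ⟨B, hB⟩ := ih
    obtain ⟨x, hx, hxj⟩ := exists_forall_dvd_dvd_sub e he s (c := e j) (y := A j - B) fun i hi ↦ by
      obtain ⟨u, v, huv⟩ := Ideal.mem_span_pair.1 (h i j)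
      refine ⟨-(u * e i) - (B - A i), dvd_sub ((dvd_mul_left _ _).neg_right) (hB i hi), v, ?_⟩
      linear_combination -huv
    refine ⟨B + x, fun i hi ↦ ?_⟩
    rcases mem_insert.1 hi with rfl | hi
    · convert hxj using 1; ring
    · convert dvd_add (hB i hi) (hx i hi) using 1; ring

lemma pow_gcd_sub_one_mem_span (x : R) (a b : ℕ) :
    x ^ Nat.gcd a b - 1 ∈ Ideal.span {x ^ a - 1, x ^ b - 1} := by
  induction a, b using Nat.gcd.induction with
  | H0 n => exact Ideal.subset_span (by simp)
  | H1 m n _ ih =>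
    rw [Nat.gcd_rec]
    refine Ideal.span_le.2 ?_ ih
    rintro _ (rfl | rfl)
    · obtain ⟨c, hc⟩ : x ^ m - 1 ∣ x ^ (m * (n / m)) - 1 := by
        simpa [pow_mul] using sub_dvd_pow_sub_pow (x ^ m) 1 (n / m)
      refine Ideal.mem_span_pair.2 ⟨-(x ^ (n % m) * c), 1, ?_⟩
      have hn : x ^ n = x ^ (n % m) * x ^ (m * (n / m)) := by rw [← pow_add, Nat.mod_add_div]
      linear_combination hn + x ^ (n % m) * hc
    · exact Ideal.subset_span (by simp)

end ChineseRemainder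

/-! ### The Frobenius module structure -/

section Frobenius
open Polynomial

/-- The polynomial `(X ^ m - 1) / (X ^ d - 1)`, for `d ∣ m`, whose action through the Frobenius is
the trace from level `m` to level `d`. -/
noncomputable def tracePoly (F : Type*) [Field F] (m d : ℕ) : F[X] :=
  ∑ i ∈ range (m / d), X ^ (d * i)

variable {F K : Type*} [Field F] [Field K] [Algebra F K]

lemma tracePoly_mul {m d : ℕ} (h : d ∣ m) : tracePoly F m d * (X ^ d - 1) = X ^ m - 1 := by
  simp_rw [tracePoly, pow_mul]
  rw [geom_sum_mul, ← pow_mul, Nat.mul_div_cancel' h]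

lemma X_pow_sub_one_ne_zero {d : ℕ} (h : d ≠ 0) : (X ^ d - 1 : F[X]) ≠ 0 :=
  X_pow_sub_C_ne_zero (Nat.pos_of_ne_zero h) (1 : F)

lemma tracePoly_mul_tracePoly {l m d : ℕ} (hd : d ≠ 0) (h : d ∣ m) (h' : m ∣ l) :
    tracePoly F m d * tracePoly F l m = tracePoly F l d := by
  refine mul_right_cancel₀ (X_pow_sub_one_ne_zero hd) ?_
  rw [tracePoly_mul (h.trans h'), ← tracePoly_mul h', ← tracePoly_mul h]
  ring

variable [Fintype F]

/-- The action of `F[X]` on `K` for which `X` acts as the Frobenius `x ↦ x ^ |F|`. -/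
noncomputable def frobAct (K : Type*) [Field K] [Algebra F K] (B : F[X]) : K →ₗ[F] K :=
  aeval (FiniteField.frobeniusAlgHom F K).toLinearMap B

lemma frobAct_mul (B C : F[X]) (x : K) : frobAct K (B * C) x = frobAct K B (frobAct K C x) := by
  simp [frobAct]

lemma frobAct_add (B C : F[X]) (x : K) : frobAct K (B + C) x = frobAct K B x + frobAct K C x := by
  simp [frobAct]

lemma frobAct_sub (B C : F[X]) (x : K) : frobAct K (B - C) x = frobAct K B x - frobAct K C x := by
  simp [frobAct]

lemma frobAct_one (x : K) : frobAct K (1 : F[X]) x = x := by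
  simp [frobAct]

lemma frobAct_X_pow (m : ℕ) (x : K) :
    frobAct K (X ^ m : F[X]) x = x ^ Fintype.card F ^ m := by
  rw [frobAct, map_pow, aeval_X, Module.End.coe_pow]
  exact congrFun (pow_iterate (Fintype.card F) m) x

lemma frobAct_tracePoly (m d : ℕ) (x : K) :
    frobAct K (tracePoly F m d) x = Tr (Fintype.card F) m d x := by
  rw [frobAct, tracePoly, map_sum, LinearMap.sum_apply]
  exact Finset.sum_congr rfl fun i _ ↦ frobAct_X_pow _ _

lemma X_pow_sub_one_aeval_zero [Fintype K] {n : ℕ} (hK : Fintype.card K = Fintype.card F ^ n)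
    (x : K) : frobAct K (X ^ n - 1 : F[X]) x = 0 := by
  rw [frobAct_sub, frobAct_X_pow, frobAct_one, ← hK, FiniteField.pow_card, sub_self]

/-- The normal basis theorem: as a module over `F[X]` through the Frobenius, `K` is cyclic with
annihilator generated by `X ^ n - 1`. -/
lemma exists_frobAct_generator [Fintype K] {n : ℕ} (hn : n ≠ 0)
    (hK : Fintype.card K = Fintype.card F ^ n) :
    ∃ γ : K, (∀ x : K, ∃ B : F[X], frobAct K B γ = x) ∧
      ∀ B : F[X], frobAct K B γ = 0 ↔ X ^ n - 1 ∣ B := by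
  have hfr : Module.finrank F K = n := by
    have := Module.card_eq_pow_finrank (K := F) (V := K)
    rw [hK] at this
    exact (Nat.pow_right_injective Fintype.one_lt_card this).symm
  obtain ⟨γ, hγ⟩ := exists_linearIndependent_algEquiv_apply F K
  have hli : LinearIndependent F fun i : Fin (Module.finrank F K) ↦ frobAct K (X ^ i.1 : F[X]) γ := by
    have h := hγ.comp _ (FiniteField.bijective_frobeniusAlgEquivOfAlgebraic_pow F K).1
    convert! h using 2 with i
    rw [frobAct_X_pow, Function.comp_apply, AlgEquiv.coe_pow,
      FiniteField.coe_frobeniusAlgEquivOfAlgebraic_iterate]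
  refine ⟨γ, fun x ↦ ?_, fun B ↦ ⟨fun hB ↦ ?_, ?_⟩⟩
  · have hx : x ∈ Submodule.span F (Set.range
        fun i : Fin (Module.finrank F K) ↦ frobAct K (X ^ i.1 : F[X]) γ) := by
      rw [hli.span_eq_top_of_card_eq_finrank' (by simp)]; trivial
    obtain ⟨c, hc⟩ := (Submodule.mem_span_range_iff_exists_fun F).1 hx
    refine ⟨∑ i, C (c i) * X ^ i.1, ?_⟩
    rw [← hc, frobAct, map_sum, LinearMap.sum_apply]
    refine Finset.sum_congr rfl fun i _ ↦ ?_
    rw [C_mul', map_smul]; rfl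
  · -- the remainder modulo `X ^ n - 1` gives a linear relation between the conjugates of `γ`
    have hmon : (X ^ n - 1 : F[X]).Monic := monic_X_pow_sub_C (1 : F) hn
    rw [← modByMonic_eq_zero_iff_dvd hmon]
    set r := B %ₘ (X ^ n - 1) with hr
    have hr0 : frobAct K r γ = 0 := by
      have h := modByMonic_add_div B (X ^ n - 1 : F[X])
      rw [← hr] at h
      rw [← h, frobAct_add, mul_comm, frobAct_mul, X_pow_sub_one_aeval_zero hK, map_zero,
        add_zero] at hB
      exact hB
    have hdeg : r.natDegree < n := by
      have h1 : (X ^ n - 1 : F[X]).natDegree = n := natDegree_X_pow_sub_C (r := (1 : F))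
      conv_rhs => rw [← h1]
      refine natDegree_modByMonic_lt _ hmon fun h ↦ ?_
      rw [h, natDegree_one] at h1
      exact hn h1.symm
    have hsum := r.as_sum_range' _ hdeg
    rw [hsum, frobAct, map_sum, LinearMap.sum_apply, Finset.sum_range] at hr0
    subst hfr
    have hc := Fintype.linearIndependent_iff.1 hli (fun i ↦ r.coeff i.1) (by
      rw [← hr0]
      refine Finset.sum_congr rfl fun i _ ↦ ?_
      rw [← C_mul_X_pow_eq_monomial, C_mul', map_smul]; rfl)
    ext i
    rw [coeff_zero]
    by_cases hi : i < Module.finrank F K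
    · exact hc ⟨i, hi⟩
    · exact coeff_eq_zero_of_natDegree_lt (by omega)
  · rintro ⟨C, rfl⟩
    rw [mul_comm, frobAct_mul, X_pow_sub_one_aeval_zero hK, map_zero]

end Frobenius

/-! ### Prescribing all traces -/

section Main
open Polynomial

/-- Cohen's theorem for an extension of degree `r ≥ 2` of a field with `q ^ L` elements, `L ≥ 6`. -/
lemma exists_primitive_trace_eq {F K : Type*} [Field F] [Field K] [Algebra F K] [Fintype F]
    [Fintype K] {q L r : ℕ} (hq : 2 ≤ q) (hL : 6 ≤ L) (hr : 2 ≤ r)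
    (hF : Fintype.card F = q ^ L) (hK : Fintype.card K = (q ^ L) ^ r) {b : F} (hb : b ≠ 0) :
    ∃ x : K, IsPrimitiveElement x ∧ Algebra.trace F K x = b := by
  by_cases h2 : (q, L, r) = (2, 6, 2)
  · obtain ⟨rfl, rfl, rfl⟩ := by simpa using h2
    exact exists_primitive_two_six hF (hK.trans (by norm_num)) hb
  by_cases h3 : (q, L, r) = (3, 6, 2)
  · obtain ⟨rfl, rfl, rfl⟩ := by simpa using h3
    exact exists_primitive_three_six hF (hK.trans (by norm_num)) hb
  refine exists_primitive_of_four_pow_le (N := (q ^ L) ^ (r - 1)) ?_ ?_ hb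
  · rw [hF, hK, ← pow_succ, Nat.sub_add_cancel (by omega)]
  · rw [hK]; exact four_pow_card_primeFactors_le hq hL hr h2 h3

/-- The subfield with `p ^ m` elements of a field with `p ^ n` elements, for `m ∣ n`, given as an
abstract field with an embedding. -/
lemma exists_algebra_of_dvd {p : ℕ} [Fact p.Prime] {K : Type*} [Field K] [Fintype K] {m n : ℕ}
    (hm : m ≠ 0) (hmn : m ∣ n) (hK : Fintype.card K = p ^ n) :
    ∃ (F : Type) (_ : Field F) (_ : Fintype F) (_ : Algebra F K), Fintype.card F = p ^ m := by
  have := charP_of_card_eq_prime_pow (R := K) hK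
  let := ZMod.algebra K p
  have hfr : Module.finrank (ZMod p) K = n := by
    have h := FiniteField.pow_finrank_eq_card p K
    rw [hK] at h
    exact Nat.pow_right_injective (Fact.out : p.Prime).two_le h
  obtain ⟨f⟩ := FiniteField.nonempty_algHom_of_finrank_dvd (F := ZMod p)
    (K := GaloisField p m) (L := K) (by rwa [GaloisField.finrank p hm, hfr])
  refine ⟨GaloisField p m, inferInstance, Fintype.ofFinite _, f.toRingHom.toAlgebra, ?_⟩
  rw [Fintype.card_eq_nat_card, GaloisField.card p m hm]

/-- The fixed points of `x ↦ x ^ |F|` lie in `F`, by Galois theory. -/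
lemma exists_algebraMap_eq {F K : Type*} [Field F] [Field K] [Algebra F K] [Fintype F] [Fintype K]
    {x : K} (hx : x ^ Fintype.card F = x) : ∃ y : F, algebraMap F K y = x := by
  refine (IsGalois.mem_range_algebraMap_iff_fixed x).2 fun σ ↦ ?_
  obtain ⟨i, rfl⟩ := (FiniteField.bijective_frobeniusAlgEquivOfAlgebraic_pow F K).2 σ
  dsimp only
  rw [AlgEquiv.coe_pow]
  exact Function.iterate_fixed hx _

/-- A nonzero element of the intermediate field `F_{q^L}` with prescribed traces. Writing the
`a i` in terms of a generator of `K` over `F[X]`, the conditions become congruences modulo the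
`X ^ d i - 1`; the solution may be changed by a multiple of all of these that does not act as zero,
since the cyclotomic factor of index `L` of `X ^ L - 1` divides none of them. -/
lemma exists_ne_zero_forall_Tr_eq {F K : Type*} [Field F] [Field K] [Algebra F K] [Fintype F]
    [Fintype K] {q n L k : ℕ} (hF : Fintype.card F = q) (hK : Fintype.card K = q ^ n) (hn : n ≠ 0)
    (hLn : L ∣ n) (d : Fin k → ℕ) (hdL : ∀ i, d i ∈ L.properDivisors)
    (a : Fin k → K) (ha : ∀ i, a i ^ q ^ d i = a i)
    (hadm : ∀ i j : Fin k,
      Tr q (d i) (Nat.gcd (d i) (d j)) (a i) = Tr q (d j) (Nat.gcd (d i) (d j)) (a j)) :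
    ∃ b : K, b ≠ 0 ∧ b ^ q ^ L = b ∧ ∀ i, Tr q L (d i) b = a i := by
  subst hF
  have hL0 : L ≠ 0 := by rintro rfl; exact hn (zero_dvd_iff.1 hLn)
  have hd : ∀ i, d i ∣ L := fun i ↦ (Nat.mem_properDivisors.1 (hdL i)).1
  have hdn : ∀ i, d i ∣ n := fun i ↦ (hd i).trans hLn
  have hd0 : ∀ i, d i ≠ 0 := fun i h ↦ hL0 (zero_dvd_iff.1 (h ▸ hd i))
  obtain ⟨γ, hγ, hγ0⟩ := exists_frobAct_generator (F := F) hn hK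
  -- by exactness, the fixed points of the `d i`-th power of the Frobenius are the traces
  have hA : ∀ i, ∃ A : F[X], frobAct K (tracePoly F n (d i) * A) γ = a i := by
    intro i
    obtain ⟨B, hB⟩ := hγ (a i)
    have h : frobAct K ((X ^ d i - 1) * B) γ = 0 := by
      rw [frobAct_mul, hB, frobAct_sub, frobAct_X_pow, frobAct_one, ha, sub_self]
    rw [hγ0, ← tracePoly_mul (hdn i), mul_comm] at h
    obtain ⟨A, rfl⟩ := (mul_dvd_mul_iff_left (X_pow_sub_one_ne_zero (hd0 i))).1 h
    exact ⟨A, hB⟩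
  choose A hA using hA
  have hcompat : ∀ i j, A i - A j ∈ Ideal.span {(X ^ d i - 1 : F[X]), X ^ d j - 1} := by
    intro i j
    have hg0 : Nat.gcd (d i) (d j) ≠ 0 := Nat.gcd_ne_zero_left (hd0 i)
    have h := hadm i j
    rw [← hA i, ← hA j, ← frobAct_tracePoly, ← frobAct_tracePoly, ← frobAct_mul, ← frobAct_mul,
      ← mul_assoc, ← mul_assoc, tracePoly_mul_tracePoly hg0 (Nat.gcd_dvd_left _ _) (hdn i),
      tracePoly_mul_tracePoly hg0 (Nat.gcd_dvd_right _ _) (hdn j), ← sub_eq_zero, ← frobAct_sub,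
      ← mul_sub, hγ0, ← tracePoly_mul ((Nat.gcd_dvd_left _ _).trans (hdn i))] at h
    have hne : tracePoly F n (Nat.gcd (d i) (d j)) ≠ 0 := by
      refine left_ne_zero_of_mul (b := (X ^ Nat.gcd (d i) (d j) - 1)) ?_
      rw [tracePoly_mul ((Nat.gcd_dvd_left _ _).trans (hdn i))]
      exact X_pow_sub_one_ne_zero hn
    exact Ideal.mem_of_dvd _ ((mul_dvd_mul_iff_left hne).1 h) (pow_gcd_sub_one_mem_span _ _ _)
  obtain ⟨B, hB⟩ := exists_forall_dvd_sub (fun i ↦ (X ^ d i - 1 : F[X])) A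
    (fun i ↦ X_pow_sub_one_ne_zero (hd0 i)) hcompat univ
  have hneL : tracePoly F n L ≠ 0 := by
    refine left_ne_zero_of_mul (b := (X ^ L - 1)) ?_
    rw [tracePoly_mul hLn]
    exact X_pow_sub_one_ne_zero hn
  have hzero : ∀ B : F[X], frobAct K (tracePoly F n L * B) γ = 0 ↔ X ^ L - 1 ∣ B := fun B ↦ by
    rw [hγ0, ← tracePoly_mul hLn, mul_dvd_mul_iff_left hneL]
  -- any solution of the congruences yields an element with the right traces
  have key : ∀ B : F[X], (∀ i, X ^ d i - 1 ∣ B - A i) →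
      frobAct K (tracePoly F n L * B) γ ^ Fintype.card F ^ L = frobAct K (tracePoly F n L * B) γ ∧
      ∀ i, Tr (Fintype.card F) L (d i) (frobAct K (tracePoly F n L * B) γ) = a i := by
    intro B hB
    constructor
    · have h : frobAct K ((X ^ L - 1) * (tracePoly F n L * B)) γ = 0 := by
        rw [hγ0, ← tracePoly_mul hLn]
        exact ⟨B, by ring⟩
      rw [frobAct_mul, frobAct_sub, frobAct_one, frobAct_X_pow] at h
      exact sub_eq_zero.1 h
    · intro i
      rw [← frobAct_tracePoly, ← frobAct_mul, ← mul_assoc,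
        tracePoly_mul_tracePoly (hd0 i) (hd i) hLn, ← hA i, ← sub_eq_zero, ← frobAct_sub,
        ← mul_sub, hγ0, ← tracePoly_mul (hdn i)]
      exact mul_dvd_mul_left _ (hB i)
  by_cases hb : frobAct K (tracePoly F n L * B) γ = 0
  · obtain ⟨C, hC⟩ : cyclotomic L F ∣ X ^ L - 1 := cyclotomic.dvd_X_pow_sub_one L F
    have hcyc : cyclotomic L F ≠ 0 := cyclotomic_ne_zero L F
    have hC0 : C ≠ 0 := right_ne_zero_of_mul (hC ▸ X_pow_sub_one_ne_zero hL0)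
    have hdC : ∀ i, X ^ d i - 1 ∣ C := fun i ↦ by
      have h := X_pow_sub_one_mul_cyclotomic_dvd_X_pow_sub_one_of_dvd F (hdL i)
      rw [hC, mul_comm] at h
      exact (mul_dvd_mul_iff_left hcyc).1 h
    have hLC : ¬ (X ^ L - 1 : F[X]) ∣ C := by
      rw [hC]
      rintro ⟨z, hz⟩
      have h1 : IsUnit (cyclotomic L F) := by
        refine IsUnit.of_mul_eq_one z (mul_right_cancel₀ hC0 ?_)
        linear_combination -hz
      exact (degree_cyclotomic_pos L F (Nat.pos_of_ne_zero hL0)).ne' (degree_eq_zero_of_isUnit h1)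
    refine ⟨_, ?_, key (B + C) fun i ↦ ?_⟩
    · rw [mul_add, frobAct_add, hb, zero_add]
      exact fun h ↦ hLC ((hzero C).1 h)
    · rw [add_sub_right_comm]
      exact dvd_add (hB i (mem_univ i)) (hdC i)
  · exact ⟨_, hb, key B fun i ↦ hB i (mem_univ i)⟩

end Main

/-- If `lcm(d_1,…,d_k) < n` then for every `d`-admissible tuple `(a_1,…,a_k)` there exists
a primitive `α ∈ F_{q^n}` with `Tr_{n/d_i}(α) = a_i` for all `i` (no exceptions arise). -/
theorem main_theorem_two (q n k : ℕ) (hq : IsPrimePow q)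
    (hn : 1 < n) (hnpp : ¬ IsPrimePow n) (hk : 1 < k)
    (K : Type*) [Field K] [Fintype K] (hK : Fintype.card K = q ^ n)
    (d : Fin k → ℕ) (hmono : StrictMono d) (hdvd : ∀ i, d i ∣ n) (hlt : ∀ i, d i < n)
    (hnd : ∀ i j, i ≠ j → ¬ d i ∣ d j)
    (hlcm : (Finset.univ : Finset (Fin k)).lcm d < n)
    (a : Fin k → K) (ha : ∀ i, a i ^ q ^ d i = a i)
    (hadm : ∀ i j : Fin k,
      Tr q (d i) (Nat.gcd (d i) (d j)) (a i) = Tr q (d j) (Nat.gcd (d i) (d j)) (a j)) :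
    ∃ α : K, IsPrimitiveElement α ∧ ∀ i, Tr q n (d i) α = a i := by
  obtain ⟨p, e, hp, he, rfl⟩ := hq
  have hpp : p.Prime := hp.nat_prime
  have : Fact p.Prime := ⟨hpp⟩
  set q := p ^ e with hq
  have hq2 : 2 ≤ q := hpp.two_le.trans (Nat.le_self_pow he.ne' p)
  set L := (univ : Finset (Fin k)).lcm d with hLdef
  have hn0 : n ≠ 0 := by omega
  have hdL : ∀ i, d i ∣ L := fun i ↦ Finset.dvd_lcm (mem_univ i)
  have hLn : L ∣ n := Finset.lcm_dvd fun i _ ↦ hdvd i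
  have hL0 : L ≠ 0 := by rintro h; rw [h] at hLn; exact hn0 (zero_dvd_iff.1 hLn)
  -- since `k ≥ 2`, no `d i` is divisible by all the others
  have hprop : ∀ i, d i ∈ L.properDivisors := by
    intro i
    refine Nat.mem_properDivisors.2 ⟨hdL i, (Nat.le_of_dvd (by omega) (hdL i)).lt_of_ne fun h ↦ ?_⟩
    have : Nontrivial (Fin k) := Fin.nontrivial_iff_two_le.2 hk
    obtain ⟨j, hj⟩ := exists_ne i
    exact hnd j i hj (h ▸ hdL j)
  -- `6` is the least number having two divisors of which neither divides the other
  have hL6 : 6 ≤ L := by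
    by_contra! hlt
    have hsmall : ∀ L ∈ range 6, ∀ a ∈ range 6, ∀ b ∈ range 6, L ≠ 0 → a ∣ L → b ∣ L →
        a ∣ b ∨ b ∣ a := by decide
    have hle : ∀ i, d i < 6 := fun i ↦ (Nat.le_of_dvd (by omega) (hdL i)).trans_lt hlt
    have hne : (⟨0, by omega⟩ : Fin k) ≠ ⟨1, by omega⟩ := by simp
    rcases hsmall L (mem_range.2 hlt) _ (mem_range.2 (hle ⟨0, by omega⟩)) _
      (mem_range.2 (hle ⟨1, by omega⟩)) hL0 (hdL _) (hdL _) with h | h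
    · exact hnd _ _ hne h
    · exact hnd _ _ hne.symm h
  obtain ⟨r, rfl⟩ := hLn
  have hr : 2 ≤ r := by
    by_contra! h
    interval_cases r <;> omega
  obtain ⟨F₁, _, _, _, hF₁⟩ := exists_algebra_of_dvd (p := p) (m := e) (n := e * (L * r)) (K := K)
    he.ne' (dvd_mul_right _ _) (by rw [hK, hq, ← pow_mul])
  obtain ⟨F₂, _, _, _, hF₂⟩ := exists_algebra_of_dvd (p := p) (m := e * L) (n := e * (L * r))
    (K := K) (mul_ne_zero he.ne' hL0) ⟨r, by ring⟩ (by rw [hK, hq, ← pow_mul])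
  rw [pow_mul] at hF₂
  obtain ⟨b, hb0, hbL, hb⟩ := exists_ne_zero_forall_Tr_eq hF₁ hK hn0 (dvd_mul_right L r) d hprop a
    ha hadm
  obtain ⟨c, rfl⟩ := exists_algebraMap_eq (F := F₂) (x := b) (by rw [hF₂]; exact hbL)
  have hKr : Fintype.card K = (q ^ L) ^ r := by rw [hK, pow_mul]
  obtain ⟨x, hx, hxc⟩ := exists_primitive_trace_eq hq2 hL6 hr hF₂ hKr
    (b := c) (by rintro rfl; simp at hb0)
  have hfr : Module.finrank F₂ K = r := by
    have h := Module.card_eq_pow_finrank (K := F₂) (V := K)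
    rw [hKr, hF₂] at h
    exact (Nat.pow_right_injective (hq2.trans (Nat.le_self_pow hL0 q)) h).symm
  have hTr : Tr q (L * r) L x = algebraMap F₂ K c := by
    rw [← hxc, FiniteField.algebraMap_trace_eq_sum_pow, hfr, Nat.card_eq_fintype_card, hF₂, Tr,
      Nat.mul_div_cancel_left _ (Nat.pos_of_ne_zero hL0)]
    exact Finset.sum_congr rfl fun i _ ↦ by rw [pow_mul q]
  refine ⟨x, hx, fun i ↦ ?_⟩
  have hdi0 : d i ≠ 0 := fun h ↦ hL0 (zero_dvd_iff.1 (h ▸ hdL i))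
  have hT : ∀ (m d : ℕ) (y : K), Tr q m d y = frobAct K (tracePoly F₁ m d) y := fun m d y ↦ by
    rw [frobAct_tracePoly, hF₁]
  -- transitivity of the trace
  rw [← hb i, ← hTr, hT, hT, hT, ← frobAct_mul,
    tracePoly_mul_tracePoly hdi0 (hdL i) (dvd_mul_right L r)]
end

section
/- Let q be a prime power, n > 1, and d_1 < ⋯ < d_k divisors of n with d_i ∤ d_j for i ≠ j, and let (a_1, …, a_k) with a_i ∈ F_{q^{d_i}} be d-admissible. Then the number N of primitive elements α ∈ F_{q^n} with Tr_{n/d_i}(α) = a_i for all i satisfies N > θ(q)·(q^{n−λ(d)} − q^{n/2}·W(q^n−1)), where θ(q) = φ(q^n−1)/(q^n−1), λ(d) = deg(lcm(x^{d_1}−1,…,x^{d_k}−1)), and W counts squarefree divisors. -/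
/-!
Let `K` have `q ^ n` elements, and let `σ` be the `q`-power Frobenius, viewed as an endomorphism of
`K` over the prime field `F`. This makes `K` an `F[X]`-module killed by `X ^ n - 1`, on which
`Tr_{N/d}` acts as `(X ^ N - 1) / (X ^ d - 1)`.

The kernel of `f(σ)` is the set of roots of a polynomial of degree `q ^ deg f`, and comparing this
bound for `f` and for the complementary divisor gives `ker f(σ) = range g(σ)`, of size `q ^ deg f`,
whenever `f * g = X ^ n - 1` (`ker_eq_range`). Hence each single equation `Tr_{n/d_i}(α) = a_i` is
solvable and is a congruence for `α` modulo `X ^ d_i - 1`. Admissibility says that these congruences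
are pairwise compatible modulo `X ^ gcd(d_i, d_j) - 1`, and since the lattice of divisors of
`X ^ n - 1` is distributive this suffices for a common solution (`exists_crt`). The solutions then
form a coset `β + U` with `|U| = q ^ (n - λ(d))` (`exists_trace_coset`).

It remains to count primitive elements in `β + U` (`card_primitive_coset`). For every prime
`l ∣ q ^ n - 1` fix a character `χ l` of order `l`; an `α ≠ 0` with `χ l α ≠ 1` for all `l` is
primitive, and the indicator function of this condition is `∏ l, (1 - (1 / l) ∑ j < l, (χ l) ^ j)`.
Expanding one prime at a time, the trivial character contributes `θ` times the number of nonzero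
elements of `β + U`. The other coefficients have `ℓ¹` norm `θ * (W - 1)`, and each nontrivial
character sum over `β + U` is at most `√(q ^ n)`, by averaging its square over all cosets
(`norm_sum_coset_le`). So `N ≥ θ * (|U| - 1 - (W - 1) * √(q ^ n))`, and `1 < √(q ^ n)` makes the
required inequality strict.
-/

open Finset Polynomial

/-- `W(m)`: the number of squarefree divisors of `m`. -/
def W (m : ℕ) : ℕ := (m.divisors.filter Squarefree).card

/-- `λ(d)`: the degree of `lcm(x^{d_1}-1, …, x^{d_k}-1)` over the prime field. -/
noncomputable def lambdaDeg (p k : ℕ) [Fact p.Prime] (d : Fin k → ℕ) : ℕ :=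
  ((Finset.univ : Finset (Fin k)).lcm fun i => (X : Polynomial (ZMod p)) ^ d i - 1).natDegree

/-! ### Trace equations as congruences in the `F[X]`-module `K` -/

/-- Half of the distributive law `gcd (lcm a b) c ∣ lcm (gcd a c) (gcd b c)`, stated for an arbitrary
common multiple `m` of the right-hand gcds. -/
theorem gcd_lcm_dvd {R : Type*} [CommMonoidWithZero R] [GCDMonoid R] {a b c m : R}
    (ha : gcd a c ∣ m) (hb : gcd b c ∣ m) : gcd (lcm a b) c ∣ m := by
  refine dvd_trans ?_ (lcm_dvd ha hb)
  set h := gcd (gcd a b) c with hh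
  by_cases h0 : h = 0
  · have h1 : gcd (gcd a b) c = 0 := h0
    rw [_root_.gcd_eq_zero_iff, _root_.gcd_eq_zero_iff] at h1
    obtain ⟨⟨rfl, rfl⟩, rfl⟩ := h1
    exact (gcd_dvd_right _ _).trans (by
      rw [zero_dvd_iff, _root_.lcm_eq_zero_iff, _root_.gcd_eq_zero_iff]; simp)
  have key : gcd (lcm a b) c * h ∣ gcd a c * gcd b c := by
    have hL := gcd_dvd_left (lcm a b) c
    have hc := gcd_dvd_right (lcm a b) c
    have hg : h ∣ gcd a b := gcd_dvd_left _ _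
    have hc' : h ∣ c := gcd_dvd_right _ _
    have hga : h ∣ a := hg.trans (gcd_dvd_left _ _)
    have hgb : h ∣ b := hg.trans (gcd_dvd_right _ _)
    have e1 : gcd (lcm a b) c * h ∣ gcd a c * b := by
      refine dvd_trans ?_ (gcd_mul_right' b a c).dvd
      refine dvd_gcd ?_ ?_
      · refine (mul_dvd_mul hL hg).trans ?_
        rw [mul_comm]; exact (gcd_mul_lcm a b).dvd
      · exact mul_dvd_mul hc hgb
    have e2 : gcd (lcm a b) c * h ∣ gcd a c * c := by
      refine dvd_trans ?_ (gcd_mul_right' c a c).dvd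
      refine dvd_gcd ?_ (mul_dvd_mul hc hc')
      rw [mul_comm]; exact mul_dvd_mul hga hc
    exact (dvd_gcd e1 e2).trans (_root_.gcd_mul_left' _ _ _).dvd
  have k2 : gcd (gcd a c) (gcd b c) ∣ h :=
    dvd_gcd (dvd_gcd ((gcd_dvd_left _ _).trans (gcd_dvd_left _ _))
      ((gcd_dvd_right _ _).trans (gcd_dvd_left _ _))) ((gcd_dvd_left _ _).trans (gcd_dvd_right _ _))
  have k3 : gcd (lcm a b) c * h ∣ lcm (gcd a c) (gcd b c) * h := by
    refine key.trans ((gcd_mul_lcm (gcd a c) (gcd b c)).symm.dvd.trans ?_)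
    rw [mul_comm]
    exact mul_dvd_mul_left _ k2
  exact (mul_dvd_mul_iff_right h0).1 k3

theorem gcd_finset_lcm_dvd {R ι : Type*} [CommMonoidWithZero R] [NormalizedGCDMonoid R]
    (S : Finset ι) (f : ι → R) {c m : R} (h : ∀ i ∈ S, gcd (f i) c ∣ m) (hS : S.Nonempty) :
    gcd (S.lcm f) c ∣ m := by
  classical
  induction hS using Finset.Nonempty.cons_induction with
  | singleton i =>
    have := h i (by simp)
    refine dvd_trans (dvd_gcd ((gcd_dvd_left _ _).trans ?_) (gcd_dvd_right _ _)) this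
    exact Finset.lcm_dvd (by simp)
  | cons i S hi hS ih =>
    rw [Finset.cons_eq_insert, Finset.lcm_insert]
    exact gcd_lcm_dvd (h i (by simp)) (ih fun j hj => h j (by simp [hj]))

section Linearized

variable {F K : Type*} [Field F] [Field K] [Algebra F K]

theorem aeval_pow_apply {q : ℕ} (σ : Module.End F K) (hσ : ∀ x, σ x = x ^ q) (i : ℕ) (x : K) :
    (σ ^ i) x = x ^ q ^ i := by
  induction i with
  | zero => simp
  | succ i ih => rw [pow_succ', Module.End.mul_apply, ih, hσ, ← pow_mul, pow_succ]

theorem Tr_eq_aeval {q : ℕ} (σ : Module.End F K) (hσ : ∀ x, σ x = x ^ q) (N d : ℕ) (x : K) :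
    Tr q N d x = aeval σ (∑ i ∈ Finset.range (N / d), X ^ (d * i) : F[X]) x := by
  simp only [Tr, map_sum, LinearMap.sum_apply, map_pow, aeval_X, aeval_pow_apply σ hσ]

variable [Fintype K]

/-- The kernel of `f(σ)` is the root set of the linearized polynomial `∑ f_i X ^ (q ^ i)`, of degree
`q ^ deg f`. -/
theorem card_ker_le {q : ℕ} (hq : 1 < q) (σ : Module.End F K) (hσ : ∀ x, σ x = x ^ q)
    {f : F[X]} (hf : f ≠ 0) : Nat.card (LinearMap.ker (aeval σ f)) ≤ q ^ f.natDegree := by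
  classical
  set P : K[X] := ∑ i ∈ Finset.range (f.natDegree + 1), C (algebraMap F K (f.coeff i)) * X ^ q ^ i
    with hP
  have hdeg : P.natDegree ≤ q ^ f.natDegree := by
    refine natDegree_sum_le_of_forall_le _ _ fun i hi => ?_
    refine (natDegree_C_mul_X_pow_le _ _).trans ?_
    exact Nat.pow_le_pow_right (by omega) (by simp at hi; omega)
  have hP0 : P ≠ 0 := by
    intro h0
    have : P.coeff (q ^ f.natDegree) = algebraMap F K f.leadingCoeff := by
      rw [hP, finsetSum_coeff, Finset.sum_eq_single f.natDegree]
      · simp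
      · intro i _ hi
        rw [coeff_C_mul_X_pow, if_neg]
        intro h
        exact hi (Nat.pow_right_injective hq h).symm
      · simp
    rw [h0, coeff_zero] at this
    exact hf (by simpa using this.symm)
  have hev : ∀ x, P.eval x = aeval σ f x := by
    intro x
    rw [hP, eval_finsetSum, aeval_eq_sum_range, LinearMap.sum_apply]
    refine Finset.sum_congr rfl fun i _ => ?_
    rw [LinearMap.smul_apply, aeval_pow_apply σ hσ, Algebra.smul_def]
    simp
  have hcard : Nat.card (LinearMap.ker (aeval σ f))
      = (Finset.univ.filter fun x : K => aeval σ f x = 0).card := by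
    rw [← Nat.card_eq_finsetCard]
    exact Nat.card_congr (Equiv.subtypeEquivRight (by simp))
  rw [hcard]
  refine (card_le_degree_of_subset_roots (p := P) fun x hx => ?_).trans hdeg
  rw [mem_roots hP0, IsRoot.def, hev]
  simpa using hx

variable {q n : ℕ} (hq : 1 < q) (hn : 0 < n) (hK : Fintype.card K = q ^ n)
  (σ : Module.End F K) (hσ : ∀ x, σ x = x ^ q)

include hK hσ in
theorem aeval_X_pow_sub_one : aeval σ (X ^ n - 1 : F[X]) = 0 := by
  ext x
  simp [aeval_pow_apply σ hσ, ← hK, FiniteField.pow_card]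

include hq hn hK hσ in
/-- Additive Hilbert 90: a rank count turns the inclusion `range ≤ ker`, valid because
`f * g = X ^ n - 1` kills `K`, into an equality. -/
theorem ker_eq_range {f g : F[X]} (hfg : f * g = X ^ n - 1) :
    LinearMap.ker (aeval σ f) = LinearMap.range (aeval σ g) ∧
      Nat.card (LinearMap.ker (aeval σ f)) = q ^ f.natDegree := by
  have hne : (X ^ n - 1 : F[X]) ≠ 0 := by simpa using X_pow_sub_C_ne_zero hn (1 : F)
  have hf : f ≠ 0 := by rintro rfl; simp [← hfg] at hne
  have hg : g ≠ 0 := by rintro rfl; simp [← hfg] at hne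
  have hd : f.natDegree + g.natDegree = n := by
    rw [← natDegree_mul hf hg, hfg, ← C_1, natDegree_X_pow_sub_C]
  have hle : LinearMap.range (aeval σ g) ≤ LinearMap.ker (aeval σ f) := by
    rintro _ ⟨x, rfl⟩
    rw [LinearMap.mem_ker, ← Module.End.mul_apply, ← map_mul, hfg, aeval_X_pow_sub_one hK σ hσ]
    simp
  have h1 := card_ker_le hq σ hσ hf
  have h2 := card_ker_le hq σ hσ hg
  have h3 : Nat.card (LinearMap.ker (aeval σ g)) * Nat.card (LinearMap.range (aeval σ g))
      = q ^ n := by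
    have := Submodule.card_eq_card_quotient_mul_card (LinearMap.ker (aeval σ g))
    rw [Nat.card_congr (aeval σ g).quotKerEquivRange.toEquiv, Nat.card_eq_fintype_card, hK] at this
    exact this.symm
  have h4 : Nat.card (LinearMap.range (aeval σ g)) ≤ Nat.card (LinearMap.ker (aeval σ f)) :=
    Nat.card_mono (Set.toFinite _) hle
  have h5 : q ^ f.natDegree ≤ Nat.card (LinearMap.range (aeval σ g)) := by
    rw [← hd, pow_add] at h3
    have hpos : 0 < q ^ g.natDegree := by positivity
    by_contra! hlt
    have := Nat.mul_lt_mul_of_le_of_lt h2 hlt hpos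
    rw [h3] at this
    linarith [mul_comm (q ^ f.natDegree) (q ^ g.natDegree)]
  refine ⟨?_, by omega⟩
  refine (SetLike.coe_injective (Set.eq_of_subset_of_ncard_le hle ?_ (Set.toFinite _))).symm
  change Nat.card (LinearMap.ker (aeval σ f)) ≤ Nat.card (LinearMap.range (aeval σ g))
  omega

include hq hn hK hσ in
/-- Divisibility of an element of `K` by a divisor of `X ^ n - 1` is divisibility of polynomials:
if `h` generates the annihilator of `x` then `m = (X ^ n - 1) / h`. -/
theorem exists_mem_range_iff (x : K) :
    ∃ m : F[X], ∀ f : F[X], f ∣ X ^ n - 1 → (x ∈ LinearMap.range (aeval σ f) ↔ f ∣ m) := by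
  have hne : (X ^ n - 1 : F[X]) ≠ 0 := by simpa using X_pow_sub_C_ne_zero hn (1 : F)
  let I : Ideal F[X] :=
    { carrier := {f | aeval σ f x = 0}
      add_mem' := fun {a b} ha hb => by simp_all
      zero_mem' := by simp
      smul_mem' := fun c f hf => by
        simp only [Set.mem_ofPred_eq, smul_eq_mul, map_mul, Module.End.mul_apply] at hf ⊢
        rw [hf, map_zero] }
  have hI : ∀ f, aeval σ f x = 0 ↔ f ∈ I := fun f => Iff.rfl
  obtain ⟨h, hh⟩ := (IsPrincipalIdealRing.principal I).principal
  have hI' : ∀ f, aeval σ f x = 0 ↔ h ∣ f := fun f => by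
    rw [hI, hh, Ideal.submodule_span_eq, Ideal.mem_span_singleton]
  obtain ⟨m, hm⟩ := (hI' (X ^ n - 1)).1 (by rw [aeval_X_pow_sub_one hK σ hσ]; rfl)
  have hh0 : h ≠ 0 := by rintro rfl; simp [hm] at hne
  refine ⟨m, fun f ⟨c, hc⟩ => ?_⟩
  have hf0 : f ≠ 0 := by rintro rfl; simp [hc] at hne
  rw [← (ker_eq_range hq hn hK σ hσ (f := c) (by rw [hc, mul_comm])).1, LinearMap.mem_ker, hI']
  rw [hm] at hc
  constructor
  · rintro ⟨e, rfl⟩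
    exact ⟨e, mul_left_cancel₀ hh0 (by rw [hc]; ring)⟩
  · rintro ⟨e, rfl⟩
    exact ⟨e, mul_left_cancel₀ hf0 (by rw [← hc]; ring)⟩

include hq hn hK hσ in
/-- Chinese remainder theorem in the `F[X]`-module `K` for pairwise compatible congruences; the
moduli need not be coprime. -/
theorem exists_crt [NormalizedGCDMonoid F[X]] {ι : Type*} [DecidableEq ι] (f : ι → F[X])
    (hf : ∀ i, f i ∣ X ^ n - 1) (x : ι → K)
    (hx : ∀ i j, x i - x j ∈ LinearMap.range (aeval σ (gcd (f i) (f j)))) (S : Finset ι) :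
    ∃ y : K, ∀ i ∈ S, y - x i ∈ LinearMap.range (aeval σ (f i)) := by
  have mono : ∀ {a b : F[X]}, a ∣ b →
      LinearMap.range (aeval σ b) ≤ LinearMap.range (aeval σ a) := by
    rintro a _ ⟨c, rfl⟩ _ ⟨u, rfl⟩
    exact ⟨aeval σ c u, by rw [← Module.End.mul_apply, ← map_mul]⟩
  induction S using Finset.induction_on with
  | empty => exact ⟨0, by simp⟩
  | insert j S hj ih =>
    obtain ⟨y, hy⟩ := ih
    rcases S.eq_empty_or_nonempty with rfl | hS
    · exact ⟨x j, fun i hi => by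
        obtain rfl : i = j := by simpa using hi
        rw [sub_self]; exact Submodule.zero_mem _⟩
    obtain ⟨m, hm⟩ := exists_mem_range_iff hq hn hK σ hσ (x j - y)
    have hdvd : ∀ i ∈ S, gcd (f i) (f j) ∣ m := fun i hi => by
      have h1 : y - x i ∈ LinearMap.range (aeval σ (gcd (f i) (f j))) :=
        mono (gcd_dvd_left _ _) (hy i hi)
      have e : x j - y = -(x i - x j) - (y - x i) := by ring
      have h2 := Submodule.sub_mem _ (Submodule.neg_mem _ (hx i j)) h1
      rw [← e] at h2
      exact (hm _ ((gcd_dvd_right _ _).trans (hf j))).1 h2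
    have hgcd : x j - y ∈ LinearMap.range (aeval σ (gcd (S.lcm f) (f j))) :=
      (hm _ ((gcd_dvd_right _ _).trans (hf j))).2 (gcd_finset_lcm_dvd S f hdvd hS)
    obtain ⟨u, hu⟩ := hgcd
    -- Bezout for the two moduli; `y` is corrected by a multiple of the first one
    obtain ⟨s, t, hst⟩ : ∃ s t, gcd (S.lcm f) (f j) = s * S.lcm f + t * f j := by
      have : gcd (S.lcm f) (f j) ∈ Ideal.span {S.lcm f, f j} := by
        obtain ⟨g, hg⟩ := (IsPrincipalIdealRing.principal (Ideal.span {S.lcm f, f j})).principal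
        rw [hg, Ideal.submodule_span_eq, Ideal.mem_span_singleton]
        refine dvd_gcd ?_ ?_ <;> rw [← Ideal.mem_span_singleton, ← Ideal.submodule_span_eq, ← hg]
          <;> exact Ideal.subset_span (by simp)
      obtain ⟨s, t, h⟩ := Ideal.mem_span_pair.1 this
      exact ⟨s, t, h.symm⟩
    refine ⟨y + aeval σ (s * S.lcm f) u, fun i hi => ?_⟩
    rw [Finset.mem_insert] at hi
    rcases hi with rfl | hi
    · have : y + aeval σ (s * S.lcm f) u - x i = - aeval σ (t * f i) u := by
        rw [hst, map_add, LinearMap.add_apply] at hu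
        linear_combination hu
      rw [this]
      exact Submodule.neg_mem _ (mono (dvd_mul_left _ _) ⟨u, rfl⟩)
    · rw [add_sub_right_comm]
      exact Submodule.add_mem _ (hy i hi)
        (mono ((Finset.dvd_lcm hi).trans (dvd_mul_left _ _)) ⟨u, rfl⟩)

theorem geomSum_mul_X_pow_sub_one {N d : ℕ} (h : d ∣ N) :
    (∑ i ∈ Finset.range (N / d), X ^ (d * i) : F[X]) * (X ^ d - 1) = X ^ N - 1 := by
  simp only [pow_mul]
  rw [geom_sum_mul, ← pow_mul, Nat.mul_div_cancel' h]

include hq hn hK hσ in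
/-- An admissible system of trace equations is solvable, and its solutions form a coset of a
subgroup of index `q ^ deg lcm (X ^ d i - 1)`. -/
theorem exists_trace_coset [NormalizedGCDMonoid F[X]] {k : ℕ} (d : Fin k → ℕ)
    (hdvd : ∀ i, d i ∣ n) (a : Fin k → K) (ha : ∀ i, a i ^ q ^ d i = a i)
    (hadm : ∀ i j : Fin k,
      Tr q (d i) (Nat.gcd (d i) (d j)) (a i) = Tr q (d j) (Nat.gcd (d i) (d j)) (a j)) :
    ∃ (β : K) (U : AddSubgroup K),
      Nat.card U * q ^ ((Finset.univ : Finset (Fin k)).lcm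
        fun i => (X : F[X]) ^ d i - 1).natDegree = q ^ n ∧
      ∀ α : K, (∀ i, Tr q n (d i) α = a i) ↔ α - β ∈ U := by
  set f : Fin k → F[X] := fun i => X ^ d i - 1 with hf
  have hT : ∀ i, (∑ l ∈ Finset.range (n / d i), X ^ (d i * l) : F[X]) * f i = X ^ n - 1 :=
    fun i => geomSum_mul_X_pow_sub_one (hdvd i)
  have hfd : ∀ i, f i ∣ X ^ n - 1 := fun i => ⟨_, by rw [mul_comm, hT i]⟩
  have hker : ∀ i (x : K), Tr q n (d i) x = 0 ↔ x ∈ LinearMap.range (aeval σ (f i)) :=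
    fun i x => by
      rw [← (ker_eq_range hq hn hK σ hσ (hT i)).1, LinearMap.mem_ker, Tr_eq_aeval σ hσ]
  have hsub : ∀ i (x y : K), Tr q n (d i) (x - y) = Tr q n (d i) x - Tr q n (d i) y :=
    fun i x y => by simp only [Tr_eq_aeval σ hσ, map_sub]
  -- surjectivity of a single trace
  have hsurj : ∀ i, ∃ x : K, Tr q n (d i) x = a i := fun i => by
    have h1 : a i ∈ LinearMap.ker (aeval σ (f i)) := by
      simp [hf, aeval_pow_apply σ hσ, ha i]
    rw [(ker_eq_range hq hn hK σ hσ (f := f i) ((mul_comm _ _).trans (hT i))).1] at h1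
    obtain ⟨x, hx⟩ := h1
    exact ⟨x, by rw [Tr_eq_aeval σ hσ, hx]⟩
  choose x hx using hsurj
  have htower : ∀ i g, g ∣ d i → Tr q (d i) g (a i) = Tr q n g (x i) := fun i g hg => by
    have hd0 : 0 < d i := Nat.pos_of_dvd_of_pos (hdvd i) hn
    have hg0 : 0 < g := Nat.pos_of_dvd_of_pos hg hd0
    have hne : (X ^ g - 1 : F[X]) ≠ 0 := by simpa using X_pow_sub_C_ne_zero hg0 (1 : F)
    rw [← hx i, Tr_eq_aeval σ hσ, Tr_eq_aeval σ hσ, Tr_eq_aeval σ hσ, ← Module.End.mul_apply,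
      ← map_mul]
    congr 2
    refine mul_right_cancel₀ hne ?_
    rw [geomSum_mul_X_pow_sub_one (hg.trans (hdvd i)), mul_right_comm,
      geomSum_mul_X_pow_sub_one hg, mul_comm, hT i]
  have hcomp : ∀ i j, x i - x j ∈ LinearMap.range (aeval σ (gcd (f i) (f j))) := fun i j => by
    set g := Nat.gcd (d i) (d j) with hg
    have hgi : g ∣ d i := Nat.gcd_dvd_left _ _
    have hgj : g ∣ d j := Nat.gcd_dvd_right _ _
    have h1 : x i - x j ∈ LinearMap.range (aeval σ (X ^ g - 1 : F[X])) := by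
      rw [← (ker_eq_range hq hn hK σ hσ (geomSum_mul_X_pow_sub_one (hgi.trans (hdvd i)))).1,
        LinearMap.mem_ker, map_sub, ← Tr_eq_aeval σ hσ, ← Tr_eq_aeval σ hσ,
        ← htower i g hgi, ← htower j g hgj, hadm i j, sub_self]
    -- modulo a common divisor of `X ^ a - 1` and `X ^ b - 1` one has `X ^ gcd a b = 1`
    have h2 : gcd (f i) (f j) ∣ X ^ g - 1 := by
      rw [← Ideal.mem_span_singleton, ← Ideal.Quotient.eq_zero_iff_mem, map_sub, map_pow, map_one,
        sub_eq_zero]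
      refine pow_gcd_eq_one.2 ⟨?_, ?_⟩ <;>
        rw [← sub_eq_zero, ← map_one (Ideal.Quotient.mk _), ← map_pow, ← map_sub,
          Ideal.Quotient.eq_zero_iff_mem, Ideal.mem_span_singleton]
      · exact gcd_dvd_left _ _
      · exact gcd_dvd_right _ _
    obtain ⟨c, hc⟩ := h2
    obtain ⟨u, hu⟩ := h1
    exact ⟨aeval σ c u, by rw [← Module.End.mul_apply, ← map_mul, ← hc, hu]⟩
  obtain ⟨β, hβ⟩ := exists_crt hq hn hK σ hσ f hfd x hcomp Finset.univ
  have hβ' : ∀ i, Tr q n (d i) β = a i := fun i => by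
    rw [← hx i, ← sub_eq_zero, ← hsub, hker]
    exact hβ i (Finset.mem_univ i)
  have hLd : Finset.univ.lcm f ∣ X ^ n - 1 := Finset.lcm_dvd fun i _ => hfd i
  refine ⟨β, (LinearMap.range (aeval σ (Finset.univ.lcm f))).toAddSubgroup, ?_, fun α => ?_⟩
  · obtain ⟨c, hc⟩ := hLd
    have hne : (X ^ n - 1 : F[X]) ≠ 0 := by simpa using X_pow_sub_C_ne_zero hn (1 : F)
    have hc0 : c ≠ 0 := by rintro rfl; simp [hc] at hne
    have hL0 : Finset.univ.lcm f ≠ 0 := by intro h; simp [hc, h] at hne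
    obtain ⟨h1, h2⟩ := ker_eq_range hq hn hK σ hσ (f := c) ((mul_comm _ _).trans hc.symm)
    rw [h1] at h2
    have h3 : Nat.card (LinearMap.range (aeval σ (Finset.univ.lcm f))).toAddSubgroup
        = q ^ c.natDegree := h2
    rw [h3, ← pow_add, ← natDegree_mul hc0 hL0, mul_comm, ← hc, ← C_1, natDegree_X_pow_sub_C]
  · obtain ⟨m, hm⟩ := exists_mem_range_iff hq hn hK σ hσ (α - β)
    have h1 : (∀ i, Tr q n (d i) α = a i) ↔ ∀ i, f i ∣ m := by
      refine forall_congr' fun i => ?_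
      rw [← hm _ (hfd i), ← hker, hsub, hβ', sub_eq_zero]
    rw [h1]
    change _ ↔ α - β ∈ LinearMap.range (aeval σ (Finset.univ.lcm f))
    rw [hm _ hLd, Finset.lcm_dvd_iff]
    simp

end Linearized

/-! ### Character sums over cosets and the sieve for primitive elements -/

section CharSums

variable {K : Type*} [Field K] [Fintype K]

/-- Distinct shifts of a nontrivial character have correlation `-1`: divide by the second factor and
substitute, so that the sum runs over all values of `χ` except `χ 1`. -/
theorem sum_mulChar_shift {χ : MulChar K ℂ} (hχ : χ ≠ 1) {u v : K} (huv : u ≠ v) :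
    ∑ x, χ (x + u) * χ⁻¹ (x + v) = -1 := by
  classical
  have hh : u - v ≠ 0 := sub_ne_zero.2 huv
  have e1 : ∑ x, χ (x + u) * χ⁻¹ (x + v) = ∑ y, χ (y + (u - v)) * χ⁻¹ y :=
    Fintype.sum_equiv (Equiv.addRight v) _ _ fun x => by
      simp only [Equiv.coe_addRight]
      congr 2
      ring
  have e2 : ∀ y : K, χ (y + (u - v)) * χ⁻¹ y = χ (1 + (u - v) * y⁻¹) - if y = 0 then 1 else 0 := by
    intro y
    by_cases hy : y = 0
    · simp [hy, MulChar.map_zero]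
    · rw [MulChar.inv_apply', ← map_mul, if_neg hy, sub_zero]
      congr 1
      field_simp
  have e3 : ∑ y : K, χ (1 + (u - v) * y⁻¹) = ∑ z, χ z :=
    Fintype.sum_equiv (((MulEquiv.inv K).toEquiv.trans (Equiv.mulLeft₀ _ hh)).trans
      (Equiv.addLeft 1)) _ _ fun y => rfl
  rw [e1, Finset.sum_congr rfl fun y _ => e2 y, Finset.sum_sub_distrib, e3,
    MulChar.sum_eq_zero_of_ne_one hχ]
  simp

/-- Square-root cancellation on cosets, by averaging `‖∑ u, χ (x + u)‖ ^ 2` over all `x`: the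
summand is constant on cosets of `U`, and the off-diagonal correlations are all `-1`. -/
theorem norm_sum_coset_le {χ : MulChar K ℂ} (hχ : χ ≠ 1) (U : AddSubgroup K) [Fintype U] (β : K) :
    ‖∑ u : U, χ (β + u)‖ ≤ √(Fintype.card K) := by
  classical
  set T : K → ℂ := fun x => ∑ u : U, χ (x + u) with hT
  have hconst : ∀ v : U, T (β + v) = T β := fun v =>
    Fintype.sum_equiv (Equiv.addLeft v) _ _ fun u => by simp [add_assoc]
  have hcorr : ∀ u v : U, (∑ x, χ (x + u) * χ⁻¹ (x + v)).re
      ≤ if u = v then (Fintype.card K : ℝ) else 0 := by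
    intro u v
    split_ifs with h
    · subst h
      refine (Complex.re_le_norm _).trans ((norm_sum_le _ _).trans ?_)
      refine (Finset.sum_le_card_nsmul _ _ 1 fun x _ => ?_).trans (by simp)
      rw [← MulChar.mul_apply, mul_inv_cancel]
      by_cases hx : x + (u : K) = 0
      · simp [hx, MulChar.map_zero]
      · rw [MulChar.one_apply (Ne.isUnit hx)]; simp
    · rw [sum_mulChar_shift hχ (fun h' => h (Subtype.ext h'))]
      simp
  have hsum : ∑ x, ‖T x‖ ^ 2 = ∑ u : U, ∑ v : U, (∑ x, χ (x + u) * χ⁻¹ (x + v)).re := by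
    simp only [← Complex.re_sum]
    rw [Finset.sum_congr rfl fun u _ => Finset.sum_comm, Finset.sum_comm, Complex.re_sum]
    refine Finset.sum_congr rfl fun x _ => ?_
    rw [← Finset.sum_mul_sum]
    have : ∑ v : U, χ⁻¹ (x + v) = (starRingEnd ℂ) (T x) := by
      rw [hT, map_sum]
      refine Finset.sum_congr rfl fun v _ => ?_
      rw [← MulChar.star_apply']; rfl
    rw [this, Complex.mul_conj, Complex.normSq_eq_norm_sq]
    exact (Complex.ofReal_re _).symm
  have hup : ∑ x, ‖T x‖ ^ 2 ≤ (Fintype.card U : ℝ) * Fintype.card K := by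
    rw [hsum]
    refine (Finset.sum_le_sum fun u _ => Finset.sum_le_sum fun v _ => hcorr u v).trans ?_
    simp
  have hlow : (Fintype.card U : ℝ) * ‖T β‖ ^ 2 ≤ ∑ x, ‖T x‖ ^ 2 := by
    have hinj : Function.Injective fun u : U => β + (u : K) := fun u v h =>
      Subtype.ext (add_left_cancel h)
    calc (Fintype.card U : ℝ) * ‖T β‖ ^ 2 = ∑ u : U, ‖T (β + u)‖ ^ 2 := by simp [hconst]
      _ = ∑ x ∈ Finset.univ.image (fun u : U => β + (u : K)), ‖T x‖ ^ 2 :=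
          (Finset.sum_image (f := fun x => ‖T x‖ ^ 2) fun u _ v _ h => hinj h).symm
      _ ≤ _ := Finset.sum_le_univ_sum_of_nonneg fun x => by positivity
  have hU : (0 : ℝ) < Fintype.card U := by exact_mod_cast Fintype.card_pos
  exact Real.le_sqrt_of_sq_le (le_of_mul_le_mul_left (hlow.trans hup) hU)

/-- `1 - 1_{χ(α) = 1}`, written as a combination of characters, when `χ` has order `l` and
`α ≠ 0`; for `α = 0` the value is `1`. -/
noncomputable def sieveFactor (χ : ℕ → MulChar K ℂ) (l : ℕ) (α : K) : ℂ :=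
  1 - (1 / (l : ℂ)) * ∑ j ∈ Finset.range l, (χ l ^ j) α

omit [Fintype K] in
theorem sieveFactor_eq (χ : ℕ → MulChar K ℂ) {l : ℕ} (hl : 0 < l) (hχ : χ l ^ l = 1) {α : K}
    (hα : α ≠ 0) : sieveFactor χ l α = if χ l α = 1 then 0 else 1 := by
  have hpow : ∀ j, (χ l ^ j) α = χ l α ^ j := fun j => by
    rw [← (Ne.isUnit hα).unit_spec, MulChar.pow_apply_coe]
  have hz : χ l α ^ l = 1 := by rw [← hpow, hχ, MulChar.one_apply (Ne.isUnit hα)]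
  have hl0 : (l : ℂ) ≠ 0 := by exact_mod_cast hl.ne'
  rw [sieveFactor, Finset.sum_congr rfl fun j _ => hpow j]
  split_ifs with h
  · simp [h, hl0]
  · have := mul_neg_geom_sum (χ l α) l
    rw [hz, sub_self, mul_eq_zero, sub_eq_zero] at this
    rw [this.resolve_left (fun h' => h h'.symm)]
    simp

/-- The character sum over `V` of `ψ`, weighted by the sieve for the primes in `P`. -/
noncomputable def sieveSum (χ : ℕ → MulChar K ℂ) (V : Finset K) (P : Finset ℕ)
    (ψ : MulChar K ℂ) : ℂ :=
  ∑ α ∈ V, ψ α * ∏ l ∈ P, sieveFactor χ l α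

omit [Fintype K] in
theorem sieveSum_insert (χ : ℕ → MulChar K ℂ) (V : Finset K) {P : Finset ℕ} {l : ℕ}
    (hl : 0 < l) (hlP : l ∉ P) (ψ : MulChar K ℂ) :
    sieveSum χ V (insert l P) ψ = (1 - 1 / (l : ℂ)) * sieveSum χ V P ψ
      - (1 / (l : ℂ)) * ∑ j ∈ Finset.Ico 1 l, sieveSum χ V P (ψ * χ l ^ j) := by
  have h : ∑ j ∈ Finset.Ico 1 l, sieveSum χ V P (ψ * χ l ^ j)
      = ∑ j ∈ Finset.range l, sieveSum χ V P (ψ * χ l ^ j) - sieveSum χ V P ψ := by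
    rw [Finset.range_eq_Ico, Finset.sum_eq_sum_Ico_succ_bot hl]
    simp
  rw [h]
  simp only [sieveSum]
  rw [Finset.sum_comm, mul_sub, mul_sum, mul_sum, mul_sum, ← Finset.sum_sub_distrib,
    ← Finset.sum_sub_distrib]
  refine Finset.sum_congr rfl fun α _ => ?_
  rw [Finset.prod_insert hlP, sieveFactor]
  simp only [MulChar.mul_apply]
  rw [← Finset.sum_mul, ← Finset.mul_sum]
  ring

omit [Fintype K] in
theorem mul_pow_ne_one {χ ψ : MulChar K ℂ} {l m j : ℕ} (hχ : orderOf χ = l)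
    (hψ : ψ ^ m = 1) (hm : l.Coprime m) (hj : j ∈ Finset.Ico 1 l) : ψ * χ ^ j ≠ 1 := by
  intro h
  have h1 : χ ^ (j * m) = 1 := by
    have := congrArg (· ^ m) h
    simpa [mul_pow, hψ, ← pow_mul] using this
  rw [← orderOf_dvd_iff_pow_eq_one, hχ] at h1
  have h2 := Nat.le_of_dvd (by simp at hj; omega) (hm.dvd_of_dvd_mul_right h1)
  simp at hj
  omega

omit [Fintype K] in
/-- The `ℓ¹` norm of the Fourier expansion of the sieve weight is `∏ 2 (1 - 1 / l)`; the coprimality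
to `P` of the order of `ψ` makes every twist of `ψ` that occurs nontrivial. -/
theorem norm_sieveSum_le {χ : ℕ → MulChar K ℂ} {V : Finset K} {B : ℝ}
    (hB : ∀ ψ : MulChar K ℂ, ψ ≠ 1 → ‖∑ α ∈ V, ψ α‖ ≤ B) (P : Finset ℕ) :
    (∀ l ∈ P, l.Prime ∧ orderOf (χ l) = l) → ∀ ψ : MulChar K ℂ, ψ ≠ 1 →
    ∀ m : ℕ, ψ ^ m = 1 → (∀ l ∈ P, l.Coprime m) →
    ‖sieveSum χ V P ψ‖ ≤ (∏ l ∈ P, (1 - 1 / (l : ℝ))) * 2 ^ P.card * B := by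
  induction P using Finset.induction_on with
  | empty =>
    intro _ ψ hψ _ _ _
    simpa [sieveSum] using hB ψ hψ
  | insert l P hlP ih =>
    intro hP ψ hψ m hm hcop
    obtain ⟨hl, hχ⟩ := hP l (by simp)
    have hP' : ∀ l ∈ P, l.Prime ∧ orderOf (χ l) = l := fun t ht => hP t (by simp [ht])
    have hl0 : (0 : ℝ) < l := by exact_mod_cast hl.pos
    have hl1 : (1 : ℝ) ≤ l := by exact_mod_cast hl.one_le
    have i1 := ih hP' ψ hψ m hm fun t ht => hcop t (by simp [ht])
    set M := (∏ l ∈ P, (1 - 1 / (l : ℝ))) * 2 ^ P.card * B with hM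
    have i2 : ∀ j ∈ Finset.Ico 1 l, ‖sieveSum χ V P (ψ * χ l ^ j)‖ ≤ M := fun j hj => by
      refine ih hP' _ (mul_pow_ne_one hχ hm (hcop l (by simp)) hj) (m * l) ?_ fun t ht => ?_
      · have h1 : χ l ^ l = 1 := orderOf_dvd_iff_pow_eq_one.1 hχ.dvd
        rw [mul_pow, pow_mul, hm, one_pow, one_mul, ← pow_mul, mul_comm m, ← mul_assoc,
          mul_comm j, mul_assoc, pow_mul, h1, one_pow]
      · refine (hcop t (by simp [ht])).mul_right ((Nat.coprime_primes (hP' t ht).1 hl).2 ?_)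
        rintro rfl
        exact hlP ht
    rw [sieveSum_insert χ V hl.pos hlP, Finset.prod_insert hlP, Finset.card_insert_of_notMem hlP]
    have n1 : ‖(1 - 1 / (l : ℂ))‖ = 1 - 1 / (l : ℝ) := by
      have : (1 - 1 / (l : ℂ)) = ((1 - 1 / (l : ℝ) : ℝ) : ℂ) := by push_cast; rfl
      rw [this, Complex.norm_real, Real.norm_of_nonneg]
      rw [sub_nonneg, div_le_one hl0]; exact hl1
    have n2 : ‖(1 / (l : ℂ))‖ = 1 / (l : ℝ) := by simp
    have n3 : ‖∑ j ∈ Finset.Ico 1 l, sieveSum χ V P (ψ * χ l ^ j)‖ ≤ (l - 1) * M := by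
      refine (norm_sum_le _ _).trans ((Finset.sum_le_card_nsmul _ _ _ i2).trans ?_)
      rw [Nat.card_Ico, nsmul_eq_mul, Nat.cast_sub hl.one_le, Nat.cast_one]
    refine (norm_sub_le _ _).trans ?_
    rw [norm_mul, norm_mul, n1, n2]
    have p1 : 0 ≤ 1 - 1 / (l : ℝ) := by rw [sub_nonneg, div_le_one hl0]; exact hl1
    calc _ ≤ (1 - 1 / (l : ℝ)) * M + 1 / (l : ℝ) * ((l - 1) * M) := by gcongr
      _ = _ := by rw [hM]; field_simp; ring

omit [Fintype K] in
/-- Sieved count against main term. Each prime adds only nontrivial twists of the trivial character, to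
which `norm_sieveSum_le` applies, so the trivial term drops out of the factor `2 ^ P.card`. -/
theorem norm_sieveSum_one_sub_le {χ : ℕ → MulChar K ℂ} {V : Finset K} {B : ℝ}
    (hB : ∀ ψ : MulChar K ℂ, ψ ≠ 1 → ‖∑ α ∈ V, ψ α‖ ≤ B) (P : Finset ℕ) :
    (∀ l ∈ P, l.Prime ∧ orderOf (χ l) = l) →
    ‖sieveSum χ V P 1 - (∏ l ∈ P, (1 - 1 / (l : ℝ)) : ℝ) * sieveSum χ V ∅ 1‖
      ≤ (∏ l ∈ P, (1 - 1 / (l : ℝ))) * (2 ^ P.card - 1) * B := by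
  induction P using Finset.induction_on with
  | empty => simp
  | insert l P hlP ih =>
    intro hP
    obtain ⟨hl, hχ⟩ := hP l (by simp)
    have hP' : ∀ l ∈ P, l.Prime ∧ orderOf (χ l) = l := fun t ht => hP t (by simp [ht])
    have hl0 : (0 : ℝ) < l := by exact_mod_cast hl.pos
    have hl1 : (1 : ℝ) ≤ l := by exact_mod_cast hl.one_le
    have i1 := ih hP'
    set θ : ℝ := ∏ l ∈ P, (1 - 1 / (l : ℝ)) with hθ
    have i2 : ∀ j ∈ Finset.Ico 1 l, ‖sieveSum χ V P (1 * χ l ^ j)‖ ≤ θ * 2 ^ P.card * B :=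
      fun j hj => by
        refine norm_sieveSum_le hB P hP' _ (mul_pow_ne_one (m := 1) hχ (one_pow _)
          (Nat.coprime_one_right _) hj) l ?_ fun t ht => ?_
        · have h1 : χ l ^ l = 1 := orderOf_dvd_iff_pow_eq_one.1 hχ.dvd
          rw [one_mul, ← pow_mul, mul_comm, pow_mul, h1, one_pow]
        · refine (Nat.coprime_primes (hP' t ht).1 hl).2 ?_
          rintro rfl
          exact hlP ht
    rw [sieveSum_insert χ V hl.pos hlP, Finset.prod_insert hlP, Finset.card_insert_of_notMem hlP,
      ← hθ]
    have p1 : 0 ≤ 1 - 1 / (l : ℝ) := by rw [sub_nonneg, div_le_one hl0]; exact hl1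
    have n1 : ‖(1 - 1 / (l : ℂ))‖ = 1 - 1 / (l : ℝ) := by
      have : (1 - 1 / (l : ℂ)) = ((1 - 1 / (l : ℝ) : ℝ) : ℂ) := by push_cast; rfl
      rw [this, Complex.norm_real, Real.norm_of_nonneg p1]
    have n2 : ‖(1 / (l : ℂ))‖ = 1 / (l : ℝ) := by simp
    have n3 : ‖∑ j ∈ Finset.Ico 1 l, sieveSum χ V P (1 * χ l ^ j)‖
        ≤ (l - 1) * (θ * 2 ^ P.card * B) := by
      refine (norm_sum_le _ _).trans ((Finset.sum_le_card_nsmul _ _ _ i2).trans ?_)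
      rw [Nat.card_Ico, nsmul_eq_mul, Nat.cast_sub hl.one_le, Nat.cast_one]
    have e : (1 - 1 / (l : ℂ)) * sieveSum χ V P 1
        - 1 / (l : ℂ) * ∑ j ∈ Finset.Ico 1 l, sieveSum χ V P (1 * χ l ^ j)
        - (((1 - 1 / (l : ℝ)) * θ : ℝ) : ℂ) * sieveSum χ V ∅ 1
        = (1 - 1 / (l : ℂ)) * (sieveSum χ V P 1 - (θ : ℂ) * sieveSum χ V ∅ 1)
        - 1 / (l : ℂ) * ∑ j ∈ Finset.Ico 1 l, sieveSum χ V P (1 * χ l ^ j) := by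
      push_cast; ring
    rw [e]
    refine (norm_sub_le _ _).trans ?_
    rw [norm_mul, norm_mul, n1, n2]
    calc _ ≤ (1 - 1 / (l : ℝ)) * (θ * (2 ^ P.card - 1) * B)
          + 1 / (l : ℝ) * ((l - 1) * (θ * 2 ^ P.card * B)) := by gcongr
      _ = _ := by field_simp; ring

/-- An element on which, for every prime `l ∣ |K| - 1`, some character of order dividing `l` is
nontrivial is an `l`-th power for none of these `l`, hence generates `Kˣ`. -/
theorem isPrimitiveElement_of_forall_ne_one_s18 {χ : ℕ → MulChar K ℂ}
    (hχ : ∀ l ∈ (Fintype.card K - 1).primeFactors, χ l ^ l = 1) {α : K} (hα : α ≠ 0)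
    (h : ∀ l ∈ (Fintype.card K - 1).primeFactors, χ l α ≠ 1) : IsPrimitiveElement α := by
  classical
  set u : Kˣ := Units.mk0 α hα with hu
  have hcard : Fintype.card Kˣ = Fintype.card K - 1 := Fintype.card_units K
  have hpos : 0 < Fintype.card K - 1 := hcard ▸ Fintype.card_pos
  obtain ⟨g, hg⟩ := IsCyclic.exists_generator (α := Kˣ)
  have hog : orderOf g = Fintype.card K - 1 := by
    rw [orderOf_eq_card_of_forall_mem_zpowers hg, Nat.card_eq_fintype_card, hcard]
  have hou : orderOf u = Fintype.card K - 1 := by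
    refine orderOf_eq_of_pow_and_pow_div_prime hpos (hcard ▸ pow_card_eq_one) fun l hl hld hul => ?_
    have hmem : l ∈ (Fintype.card K - 1).primeFactors := Nat.mem_primeFactors.2 ⟨hl, hld, hpos.ne'⟩
    obtain ⟨m, hm⟩ := (mem_powers_iff_mem_zpowers).2 (hg u)
    simp only at hm
    rw [← hm, ← pow_mul, ← orderOf_dvd_iff_pow_eq_one, hog] at hul
    obtain ⟨c, hc⟩ := hld
    have hc0 : 0 < c := Nat.pos_of_ne_zero (by rintro rfl; simp [hc] at hpos)
    rw [hc, Nat.mul_div_cancel_left _ hl.pos] at hul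
    obtain ⟨e, rfl⟩ := Nat.dvd_of_mul_dvd_mul_right hc0 hul
    refine h l hmem ?_
    have : α = ((g ^ e : Kˣ) : K) ^ l := by
      rw [← Units.val_pow_eq_pow_val, ← pow_mul, mul_comm, hm]; simp [hu]
    rw [this, map_pow, ← MulChar.pow_apply_coe, hχ l hmem, MulChar.one_apply_coe]
  refine ⟨hα, fun β hβ => ?_⟩
  have hgen : ∀ x : Kˣ, x ∈ Subgroup.zpowers u := by
    intro x
    have : Subgroup.zpowers u = ⊤ := by
      apply Subgroup.eq_top_of_card_eq
      rw [Nat.card_zpowers, hou, Nat.card_eq_fintype_card, hcard]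
    rw [this]; trivial
  obtain ⟨m, hm⟩ := (mem_powers_iff_mem_zpowers).2 (hgen (Units.mk0 β hβ))
  refine ⟨m, ?_⟩
  simpa [hu] using (congrArg Units.val hm).symm

theorem W_eq {m : ℕ} (hm : m ≠ 0) : W m = 2 ^ m.primeFactors.card := by
  have := Nat.sum_divisors_filter_squarefree hm (f := fun _ => 1)
  rw [W, Finset.card_eq_sum_ones, this, Nat.factors_eq]
  rw [← Finset.card_eq_sum_ones, Finset.card_powerset]
  rfl

/-- Lower bound for the number of primitive elements in a coset of an additive subgroup. -/
theorem card_primitive_coset (hK : 1 < Fintype.card K)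
    (U : AddSubgroup K) (β : K) :
    ((Nat.totient (Fintype.card K - 1) : ℝ) / ((Fintype.card K - 1 : ℕ) : ℝ)) *
        (Nat.card U - √(Fintype.card K) * W (Fintype.card K - 1))
      < Nat.card {α : K // IsPrimitiveElement α ∧ α - β ∈ U} := by
  classical
  set M := Fintype.card K - 1 with hM
  have hM0 : M ≠ 0 := by omega
  set P := M.primeFactors with hP
  have hex : ∀ l : ℕ, ∃ χ : MulChar K ℂ, l ∈ P → orderOf χ = l := fun l => by
    by_cases hl : l ∈ P
    · obtain ⟨hlp, hld, -⟩ := Nat.mem_primeFactors.1 hl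
      obtain ⟨χ, h⟩ := MulChar.exists_mulChar_orderOf K hld
        (Complex.isPrimitiveRoot_exp l hlp.ne_zero)
      exact ⟨χ, fun _ => h⟩
    · exact ⟨1, fun h => absurd h hl⟩
  choose χ hχ using hex
  have hχP : ∀ l ∈ P, l.Prime ∧ orderOf (χ l) = l := fun l hl =>
    ⟨Nat.prime_of_mem_primeFactors hl, hχ l hl⟩
  have hχpow : ∀ l ∈ P, χ l ^ l = 1 := fun l hl => orderOf_dvd_iff_pow_eq_one.1 (hχ l hl).dvd
  set V : Finset K := Finset.univ.filter fun α => α - β ∈ U with hV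
  have hVsum : ∀ f : K → ℂ, ∑ α ∈ V, f α = ∑ u : U, f (β + u) := fun f => by
    symm
    refine Finset.sum_bij (fun u _ => β + (u : K)) ?_ ?_ ?_ ?_
    · intro u _; simp [hV]
    · intro u _ v _ h; exact Subtype.ext (add_left_cancel h)
    · intro α hα
      exact ⟨⟨α - β, by simpa [hV] using hα⟩, by simp, by simp⟩
    · intro u _; rfl
  have hVcard : V.card = Nat.card U := by
    have := hVsum fun _ => 1
    simp only [Finset.sum_const, nsmul_eq_mul, mul_one, Finset.card_univ] at this
    rw [Nat.card_eq_fintype_card]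
    exact_mod_cast this
  have hB : ∀ ψ : MulChar K ℂ, ψ ≠ 1 → ‖∑ α ∈ V, ψ α‖ ≤ √(Fintype.card K) := fun ψ hψ => by
    rw [hVsum]; exact norm_sum_coset_le hψ U β
  have main := norm_sieveSum_one_sub_le hB P hχP
  set θ : ℝ := ∏ l ∈ P, (1 - 1 / (l : ℝ)) with hθ
  have hθM : (Nat.totient M : ℝ) / (M : ℝ) = θ := by
    have h1 := Nat.totient_eq_mul_prod_factors M
    have h2 : (Nat.totient M : ℝ) = M * ∏ l ∈ P, (1 - (l : ℝ)⁻¹) := by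
      have h3 := congrArg (Rat.cast : ℚ → ℝ) h1
      push_cast at h3
      exact h3
    rw [h2, mul_div_cancel_left₀ _ (by exact_mod_cast hM0), hθ]
    simp
  have hθ0 : 0 < θ := by
    rw [← hθM]
    have : 0 < Nat.totient M := Nat.totient_pos.2 (by omega)
    positivity
  -- the sieve sum for the trivial character counts elements surviving the sieve
  have hcount : sieveSum χ V P 1
      = ((V.filter fun α => α ≠ 0 ∧ ∀ l ∈ P, χ l α ≠ 1).card : ℂ) := by
    rw [sieveSum, Finset.card_filter, Nat.cast_sum]
    refine Finset.sum_congr rfl fun α _ => ?_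
    by_cases hα : α = 0
    · simp [hα, MulChar.map_zero]
    · rw [MulChar.one_apply (Ne.isUnit hα), one_mul, Finset.prod_congr rfl fun l hl =>
        sieveFactor_eq χ (hχP l hl).1.pos (hχpow l hl) hα]
      by_cases hall : ∀ l ∈ P, χ l α ≠ 1
      · rw [if_pos ⟨hα, hall⟩, Finset.prod_eq_one fun l hl => if_neg (hall l hl)]
        simp
      · rw [if_neg (fun h => hall h.2)]
        push Not at hall
        obtain ⟨l, hl, h⟩ := hall
        have hz : (∏ l ∈ P, if χ l α = 1 then (0 : ℂ) else 1) = 0 :=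
          Finset.prod_eq_zero hl (if_pos h)
        rw [hz]
        simp
  have hcount0 : sieveSum χ V ∅ 1 = ((V.filter fun α => α ≠ 0).card : ℂ) := by
    rw [sieveSum, Finset.card_filter, Nat.cast_sum]
    refine Finset.sum_congr rfl fun α _ => ?_
    by_cases hα : α = 0
    · simp [hα, MulChar.map_zero]
    · simp [hα, MulChar.one_apply (Ne.isUnit hα)]
  have hV1 : (Nat.card U : ℝ) - 1 ≤ ((V.filter fun α => α ≠ 0).card : ℝ) := by
    have h1 : V.card ≤ (V.filter fun α => α ≠ 0).card + 1 := by
      have := Finset.pred_card_le_card_erase (s := V) (a := (0 : K))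
      rw [Finset.filter_ne']
      omega
    rw [hVcard] at h1
    have : (Nat.card U : ℝ) ≤ ((V.filter fun α => α ≠ 0).card : ℝ) + 1 := by exact_mod_cast h1
    linarith
  have hN : ((V.filter fun α => α ≠ 0 ∧ ∀ l ∈ P, χ l α ≠ 1).card : ℝ)
      ≤ Nat.card {α : K // IsPrimitiveElement α ∧ α - β ∈ U} := by
    have h1 : Nat.card {α : K // IsPrimitiveElement α ∧ α - β ∈ U}
        = (Finset.univ.filter fun α : K => IsPrimitiveElement α ∧ α - β ∈ U).card := by
      rw [← Nat.card_eq_finsetCard]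
      exact Nat.card_congr (Equiv.subtypeEquivRight (by simp))
    rw [h1]
    refine Nat.cast_le.2 (Finset.card_le_card fun α hα => ?_)
    simp only [hV, Finset.mem_filter, Finset.mem_univ, true_and] at hα ⊢
    exact ⟨isPrimitiveElement_of_forall_ne_one_s18 hχpow hα.2.1 hα.2.2, hα.1⟩
  refine lt_of_lt_of_le ?_ hN
  rw [hcount, hcount0] at main
  have main' := (abs_le.1 ((Complex.abs_re_le_norm _).trans main)).1
  rw [Complex.sub_re, Complex.re_ofReal_mul, Complex.natCast_re, Complex.natCast_re] at main'
  rw [hθM, W_eq hM0, ← hP]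
  push_cast
  have hs : 1 < √(Fintype.card K : ℝ) := by
    rw [Real.lt_sqrt zero_le_one]
    simpa using hK
  nlinarith [mul_le_mul_of_nonneg_left hV1 hθ0.le, mul_lt_mul_of_pos_left hs hθ0]

end CharSums

/-! ### Primitive elements with prescribed traces -/

/-- Lower bound for the number `N` of primitive `α ∈ F_{q^n}` with prescribed traces:
`N > θ(q)·(q^{n-λ(d)} - q^{n/2}·W(q^n-1))` with `θ(q) = φ(q^n-1)/(q^n-1)`. -/
theorem count_lower_bound (p s q n k : ℕ) [Fact p.Prime] (hs : 0 < s) (hq : q = p ^ s)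
    (hn : 1 < n) (hnpp : ¬ IsPrimePow n) (hk : 1 < k)
    (K : Type*) [Field K] [Fintype K] (hK : Fintype.card K = q ^ n)
    (d : Fin k → ℕ) (hmono : StrictMono d) (hdvd : ∀ i, d i ∣ n)
    (hnd : ∀ i j, i ≠ j → ¬ d i ∣ d j)
    (a : Fin k → K) (ha : ∀ i, a i ^ q ^ d i = a i)
    (hadm : ∀ i j : Fin k,
      Tr q (d i) (Nat.gcd (d i) (d j)) (a i) = Tr q (d j) (Nat.gcd (d i) (d j)) (a j)) :
    (Nat.card {α : K // IsPrimitiveElement α ∧ ∀ i, Tr q n (d i) α = a i} : ℝ) >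
      ((Nat.totient (q ^ n - 1) : ℝ) / ((q ^ n - 1 : ℕ) : ℝ)) *
        ((q : ℝ) ^ ((n : ℝ) - (lambdaDeg p k d : ℝ)) -
          (q : ℝ) ^ ((n : ℝ) / 2) * (W (q ^ n - 1) : ℝ)) := by
  have hp : p.Prime := Fact.out
  have hq1 : 1 < q := hq ▸ Nat.one_lt_pow hs.ne' hp.one_lt
  have hcard : Fintype.card K = p ^ (s * n) := by rw [hK, hq, pow_mul]
  have hchar : CharP K p := by
    obtain ⟨r, hr⟩ := CharP.exists K
    obtain ⟨m, hrp, hm⟩ := FiniteField.card K r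
    have h1 : r ∣ p ^ (s * n) := by
      rw [← hcard, hm]
      exact dvd_pow_self r m.pos.ne'
    obtain rfl := (Nat.prime_dvd_prime_iff_eq hrp hp).1 (hrp.dvd_of_dvd_pow h1)
    exact hr
  let _ : Algebra (ZMod p) K := ZMod.algebra K p
  let σ : Module.End (ZMod p) K := (FiniteField.frobeniusAlgHom (ZMod p) K).toLinearMap ^ s
  have hσ : ∀ x, σ x = x ^ q := fun x => by
    rw [hq]
    refine aeval_pow_apply _ (fun y => ?_) s x
    simp
  obtain ⟨β, U, hU, hmem⟩ :=
    exists_trace_coset hq1 (by omega) hK σ hσ d hdvd a ha hadm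
  have hU' : Nat.card U * q ^ lambdaDeg p k d = q ^ n := hU
  have main := card_primitive_coset (hK ▸ Nat.one_lt_pow (by omega) hq1) U β
  have hq0 : (0 : ℝ) < q := by exact_mod_cast (by omega : 0 < q)
  have e1 : (q : ℝ) ^ ((n : ℝ) - (lambdaDeg p k d : ℝ)) = Nat.card U := by
    rw [Real.rpow_sub hq0, Real.rpow_natCast, Real.rpow_natCast, div_eq_iff (by positivity)]
    exact_mod_cast hU'.symm
  have e2 : (q : ℝ) ^ ((n : ℝ) / 2) = √(Fintype.card K) := by
    rw [hK, Nat.cast_pow, Real.sqrt_eq_rpow, ← Real.rpow_natCast, ← Real.rpow_mul hq0.le]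
    congr 1
    ring
  have e3 : Nat.card {α : K // IsPrimitiveElement α ∧ ∀ i, Tr q n (d i) α = a i}
      = Nat.card {α : K // IsPrimitiveElement α ∧ α - β ∈ U} :=
    Nat.card_congr (Equiv.subtypeEquivRight fun α => and_congr_right fun _ => hmem α)
  rw [e1, e2, e3, gt_iff_lt, ← hK]
  exact main
end
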